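/- arXiv:1404.3127 — 7 statements merged into one kernel-verified Lean document; each statement's English description precedes it below -/
import Mathlib

section
/- Let p ∈ (0,1) and q = 1-p. Let f : ℝ → ℝ be continuously differentiable with f ∈ L^p(ℝ) and f' bounded and in L^p(ℝ). Then ‖f‖_∞ ≤ ‖f'‖_∞^q · ‖f'‖_p^p. -/
open Real MeasureTheory Filter Set

noncomputable def pNorm (p : ℝ) (f : ℝ → ℝ) : ℝ := (∫ x : ℝ, |f x| ^ p) ^ (1 / p)

noncomputable def supNorm (f : ℝ → ℝ) : ℝ := ⨆ x : ℝ, |f x|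

def MemLp' (p : ℝ) (f : ℝ → ℝ) : Prop := MeasureTheory.Integrable (fun x : ℝ => |f x| ^ p)

def BddFun (f : ℝ → ℝ) : Prop := ∃ C : ℝ, ∀ x, |f x| ≤ C

noncomputable def MNorm (p : ℝ) (M : ℕ → ℝ) (f : ℝ → ℝ) : ℝ :=
  ⨆ k : ℕ, pNorm p (iteratedDeriv k f) / M k

/-- The class `S`: smooth functions whose derivatives are all bounded and in `L^p`,
with finite Carleman–Sobolev quasi-norm, and `limsup ‖f^(k)‖_∞ ^ (q^k) ≤ 1`. -/
def MemS (p q : ℝ) (M : ℕ → ℝ) (f : ℝ → ℝ) : Prop :=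
  ContDiff ℝ (⊤ : ℕ∞) f ∧
  (∀ k, BddFun (iteratedDeriv k f) ∧ MemLp' p (iteratedDeriv k f)) ∧
  BddAbove (Set.range fun k : ℕ => pNorm p (iteratedDeriv k f) / M k) ∧
  Filter.limsup (fun k : ℕ => supNorm (iteratedDeriv k f) ^ (q ^ k)) Filter.atTop ≤ 1

/-- `μ_M = ∏_{k=1}^∞ M_k ^ (p q^(k-1))`, as a `tprod`. -/
noncomputable def muProd (p q : ℝ) (M : ℕ → ℝ) : ℝ := ∏' k : ℕ, M (k + 1) ^ (p * q ^ k)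

/-- Convergence of the product `μ_M`. -/
def MuFinite (p q : ℝ) (M : ℕ → ℝ) : Prop := Multipliable fun k : ℕ => M (k + 1) ^ (p * q ^ k)

/-- basic estimate. If `f` is `C¹`, `f ∈ L^p`, and `f'` is bounded and in `L^p`,
then `‖f‖_∞ ≤ ‖f'‖_∞^q ‖f'‖_p^p`. -/
theorem sup_le_deriv_sup_rpow_mul_pNorm_rpow (p q : ℝ) (hp : 0 < p) (hp1 : p < 1)
    (hq : q = 1 - p) (f : ℝ → ℝ) (hf : ContDiff ℝ 1 f)
    (hfLp : MemLp' p f) (hbd : BddFun (deriv f)) (hfderivLp : MemLp' p (deriv f)) :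
    supNorm f ≤ supNorm (deriv f) ^ q * pNorm p (deriv f) ^ p := by
  obtain ⟨C, hC⟩ := hbd
  have hS : ∀ x, |deriv f x| ≤ supNorm (deriv f) := fun x =>
    le_ciSup (f := fun x => |deriv f x|) ⟨C, by rintro _ ⟨x, rfl⟩; exact hC x⟩ x
  have hS0 : 0 ≤ supNorm (deriv f) := (abs_nonneg _).trans (hS 0)
  have hI0 : 0 ≤ ∫ x : ℝ, |deriv f x| ^ p :=
    integral_nonneg fun x => Real.rpow_nonneg (abs_nonneg _) _
  have hq0 : 0 < q := by linarith
  have hN : pNorm p (deriv f) ^ p = ∫ x : ℝ, |deriv f x| ^ p := by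
    unfold pNorm
    rw [← Real.rpow_mul hI0, one_div_mul_cancel hp.ne', Real.rpow_one]
  rw [hN]
  have hpt : ∀ x, |deriv f x| ≤ supNorm (deriv f) ^ q * |deriv f x| ^ p := by
    intro x
    calc |deriv f x| = |deriv f x| ^ q * |deriv f x| ^ p := by
          rw [← Real.rpow_add_of_nonneg (abs_nonneg _) hq0.le hp.le, hq]
          simp
      _ ≤ _ := by
          gcongr
          exact hS x
  have hint : Integrable (fun x => supNorm (deriv f) ^ q * |deriv f x| ^ p) :=
    Integrable.const_mul hfderivLp _
  have hdc : Continuous (deriv f) := hf.continuous_deriv le_rfl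
  have hdi : Integrable (fun x => |deriv f x|) := by
    refine hint.mono' hdc.abs.aestronglyMeasurable (Eventually.of_forall fun x => ?_)
    rw [Real.norm_eq_abs, abs_abs]
    exact hpt x
  have key : ∀ x y, |f x - f y| ≤ supNorm (deriv f) ^ q * ∫ x : ℝ, |deriv f x| ^ p := by
    intro x y
    rw [← integral_const_mul]
    have hftc : ∫ t in y..x, deriv f t = f x - f y :=
      intervalIntegral.integral_deriv_eq_sub
        (fun t _ => (hf.differentiable one_ne_zero) t) (hdc.intervalIntegrable _ _)
    rw [← hftc, ← Real.norm_eq_abs]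
    calc ‖∫ t in y..x, deriv f t‖ ≤ ∫ t in Set.uIoc y x, ‖deriv f t‖ :=
          intervalIntegral.norm_integral_le_integral_norm_uIoc
      _ ≤ ∫ t, |deriv f t| :=
          setIntegral_le_integral hdi (Eventually.of_forall fun t => abs_nonneg _)
      _ ≤ _ := integral_mono hdi hint hpt
  have small : ∀ ε > 0, ∃ y, |f y| < ε := by
    intro ε hε
    by_contra! h
    have hc : Integrable (fun _ : ℝ => ε ^ p) := by
      refine Integrable.mono' hfLp aestronglyMeasurable_const (Eventually.of_forall fun x => ?_)
      rw [Real.norm_eq_abs, abs_of_nonneg (Real.rpow_nonneg hε.le _)]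
      exact Real.rpow_le_rpow hε.le (h x) hp.le
    rw [integrable_const_iff] at hc
    rcases hc with hc | hc
    · exact (Real.rpow_pos_of_pos hε p).ne' hc
    · have := hc.measure_univ_lt_top
      simp at this
  refine ciSup_le fun x => le_of_forall_pos_le_add fun ε hε => ?_
  obtain ⟨y, hy⟩ := small ε hε
  have h1 := key x y
  have h2 := abs_sub_abs_le_abs_sub (f x) (f y)
  linarith
end

section
/- Let p ∈ (0,1) and q = 1-p. Let f : ℝ → ℝ be smooth with every derivative f^{(k)} bounded and in L^p(ℝ). Then for every n ≥ 1, ‖f‖_∞ ≤ ‖f^{(n)}‖_∞^{q^n} · ∏_{k=1}^n ‖f^{(k)}‖_p^{p q^{k-1}}. -/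
open Real MeasureTheory Filter Set

lemma abs_le_supNorm {g : ℝ → ℝ} (hg : BddFun g) (x : ℝ) : |g x| ≤ supNorm g := by
  obtain ⟨C, hC⟩ := hg
  exact le_ciSup (f := fun x => |g x|) ⟨C, by rintro _ ⟨y, rfl⟩; exact hC y⟩ x

lemma supNorm_nonneg (g : ℝ → ℝ) : 0 ≤ supNorm g :=
  Real.iSup_nonneg fun x => abs_nonneg (g x)

lemma pNorm_nonneg (p : ℝ) (g : ℝ → ℝ) : 0 ≤ pNorm p g :=
  Real.rpow_nonneg (integral_nonneg fun x => Real.rpow_nonneg (abs_nonneg _) _) _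

lemma basic_estimate (p q : ℝ) (hp : 0 < p) (hp1 : p < 1) (hq : q = 1 - p)
    (g g' : ℝ → ℝ) (hd : ∀ x, HasDerivAt g (g' x) x) (hc : Continuous g')
    (hb : BddFun g') (hL : MemLp' p g) (hL' : MemLp' p g') :
    supNorm g ≤ supNorm g' ^ q * pNorm p g' ^ p := by
  have hq0 : 0 < q := by linarith
  have hpow : pNorm p g' ^ p = ∫ x, |g' x| ^ p := by
    unfold pNorm
    rw [← Real.rpow_mul (integral_nonneg fun x => Real.rpow_nonneg (abs_nonneg _) _),
      one_div_mul_cancel hp.ne', Real.rpow_one]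
  have hpt : ∀ x, |g' x| ≤ supNorm g' ^ q * |g' x| ^ p := by
    intro x
    calc |g' x| = |g' x| ^ (q + p) := by rw [hq, sub_add_cancel, Real.rpow_one]
      _ = |g' x| ^ q * |g' x| ^ p := Real.rpow_add_of_nonneg (abs_nonneg _) hq0.le hp.le
      _ ≤ _ := by
        gcongr
        exact abs_le_supNorm hb x
  have hI : Integrable (fun x => supNorm g' ^ q * |g' x| ^ p) := Integrable.const_mul hL' _
  have hI' : Integrable (fun x => |g' x|) :=
    hI.mono' hc.abs.aestronglyMeasurable (ae_of_all _ fun x => by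
      rw [Real.norm_eq_abs, abs_abs]; exact hpt x)
  have htot : ∫ x, |g' x| ≤ supNorm g' ^ q * pNorm p g' ^ p := by
    rw [hpow, ← integral_const_mul]
    exact integral_mono hI' hI hpt
  refine ciSup_le fun x => le_trans (le_of_forall_pos_le_add fun ε hε => ?_) htot
  obtain ⟨y, hy⟩ : ∃ y, |g y| < ε := by
    by_contra! h
    have h1 : Integrable (fun _ : ℝ => ε ^ p) :=
      Integrable.mono' (show Integrable (fun x : ℝ => |g x| ^ p) volume from hL) aestronglyMeasurable_const
        (ae_of_all _ fun x => by
          rw [Real.norm_eq_abs, abs_of_nonneg (Real.rpow_nonneg hε.le _)]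
          exact Real.rpow_le_rpow hε.le (h x) hp.le)
    rw [integrable_const_iff] at h1
    rcases h1 with h1 | h1
    · exact (Real.rpow_pos_of_pos hε p).ne' h1
    · have := h1.measure_univ_lt_top
      simp at this
  have hftc : ∫ t in y..x, g' t = g x - g y :=
    intervalIntegral.integral_eq_sub_of_hasDerivAt (fun t _ => hd t) (hc.intervalIntegrable _ _)
  have h2 : |g x - g y| ≤ ∫ t, |g' t| := by
    rw [← hftc]
    calc |∫ t in y..x, g' t| ≤ ∫ t in Set.uIoc y x, |g' t| := by
          simpa only [Real.norm_eq_abs] using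
            intervalIntegral.norm_integral_le_integral_norm_uIoc (f := g') (a := y) (b := x)
              (μ := volume)
      _ ≤ _ := setIntegral_le_integral hI' (ae_of_all _ fun t => abs_nonneg _)
  have h3 : |g x| ≤ |g x - g y| + |g y| := by
    simpa using abs_add_le (g x - g y) (g y)
  linarith

/-- iterated estimate. If `f` is smooth with all derivatives bounded and in
`L^p`, then for `n ≥ 1`, `‖f‖_∞ ≤ ‖f^(n)‖_∞^(q^n) ∏_{k=1}^n ‖f^(k)‖_p^(p q^(k-1))`. -/
theorem sup_le_iterated_product (p q : ℝ) (hp : 0 < p) (hp1 : p < 1) (hq : q = 1 - p)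
    (f : ℝ → ℝ) (hf : ContDiff ℝ (⊤ : ℕ∞) f)
    (hbd : ∀ k, BddFun (iteratedDeriv k f)) (hLp : ∀ k, MemLp' p (iteratedDeriv k f))
    (n : ℕ) (hn : 1 ≤ n) :
    supNorm f ≤ supNorm (iteratedDeriv n f) ^ (q ^ n) *
      ∏ k ∈ Finset.Icc 1 n, pNorm p (iteratedDeriv k f) ^ (p * q ^ (k - 1)) := by
  clear hn
  have hq0 : 0 < q := by linarith
  induction n with
  | zero => simp
  | succ n ih =>
    have hstep : supNorm (iteratedDeriv n f) ≤
        supNorm (iteratedDeriv (n + 1) f) ^ q * pNorm p (iteratedDeriv (n + 1) f) ^ p := by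
      refine basic_estimate p q hp hp1 hq _ _ (fun x => ?_)
        (hf.continuous_iteratedDeriv (n + 1) (by exact_mod_cast le_top)) (hbd _) (hLp _) (hLp _)
      rw [iteratedDeriv_succ]
      exact ((hf.differentiable_iteratedDeriv n (by exact_mod_cast WithTop.coe_lt_top _)) x).hasDerivAt
    refine ih.trans ?_
    rw [Finset.prod_Icc_succ_top (by omega), Nat.add_sub_cancel]
    have hP : 0 ≤ ∏ k ∈ Finset.Icc 1 n, pNorm p (iteratedDeriv k f) ^ (p * q ^ (k - 1)) :=
      Finset.prod_nonneg fun k _ => Real.rpow_nonneg (pNorm_nonneg _ _) _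
    have h1 := Real.rpow_le_rpow (supNorm_nonneg _) hstep (pow_pos hq0 n).le
    rw [Real.mul_rpow (Real.rpow_nonneg (supNorm_nonneg _) _)
      (Real.rpow_nonneg (pNorm_nonneg _ _) _), ← Real.rpow_mul (supNorm_nonneg _),
      ← Real.rpow_mul (pNorm_nonneg _ _), ← pow_succ'] at h1
    refine (mul_le_mul_of_nonneg_right h1 hP).trans (le_of_eq ?_)
    ring
end

section
/- Let c ∈ (0,1) and let (a_n)_{n≥0} be a decreasing summable sequence of positive reals satisfying ∑_{j>k} a_j ≤ (1-c) a_k for all k ≥ 0. For a > 0 let H_a = (1/a)·χ_{[0,a]} and let u_n = H_{a_0} * H_{a_1} * ⋯ * H_{a_n}. Then for each n the n-th derivative of u_n (which exists off a finite set, equivalently in the distributional sense) is supported on 2^n pairwise disjoint intervals I_1, …, I_{2^n}, each of length a_n, with I_1 = [0, a_n], and on each interval I_j the n-th derivative is constant equal to ±1/(a_0 a_1 ⋯ a_n); it vanishes off these intervals. -/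
open Real MeasureTheory Filter Set

/-- `H_a = (1/a) · χ_{[0,a]}`. -/
noncomputable def Hfun (a : ℝ) : ℝ → ℝ := Set.indicator (Set.Icc 0 a) fun _ => 1 / a

/-- Convolution of real functions on `ℝ`. -/
noncomputable def convFun (f g : ℝ → ℝ) : ℝ → ℝ := fun x => ∫ t : ℝ, f t * g (x - t)

/-- `u_n = H_{a_0} * H_{a_1} * ⋯ * H_{a_n}`. -/
noncomputable def uSeq (a : ℕ → ℝ) : ℕ → ℝ → ℝ
  | 0 => Hfun (a 0)
  | n + 1 => convFun (uSeq a n) (Hfun (a (n + 1)))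

/-- The separation condition `∑_{j>k} a_j ≤ (1-c) a_k` for all `k`. -/
def SepCond (c : ℝ) (a : ℕ → ℝ) : Prop := ∀ k : ℕ, ∑' j : ℕ, a (k + 1 + j) ≤ (1 - c) * a k


lemma aux_convFun_eq (f : ℝ → ℝ) (b : ℝ) (hb : 0 < b) (x : ℝ) :
    convFun f (Hfun b) x = (∫ t in (x - b)..x, f t) / b := by
  unfold convFun Hfun
  rw [intervalIntegral.integral_of_le (by linarith), ← integral_Icc_eq_integral_Ioc,
    ← integral_indicator measurableSet_Icc, ← integral_div]
  congr 1
  ext t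
  by_cases h : t ∈ Icc (x - b) x
  · have h' : x - t ∈ Icc 0 b := ⟨by linarith [h.2], by linarith [h.1]⟩
    rw [indicator_of_mem h, indicator_of_mem h']
    ring
  · have h' : x - t ∉ Icc 0 b := fun h' => h ⟨by linarith [h'.2], by linarith [h'.1]⟩
    rw [indicator_of_notMem h, indicator_of_notMem h']
    simp

lemma aux_Hfun_integrable (b : ℝ) : Integrable (Hfun b) := by
  unfold Hfun
  rw [integrable_indicator_iff measurableSet_Icc]
  exact integrableOn_const (by simp)

lemma aux_conv_integrable (f g : ℝ → ℝ) (hf : Integrable f) (hg : Integrable g) :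
    Integrable (convFun f g) :=
  hf.integrable_convolution (ContinuousLinearMap.mul ℝ ℝ) hg

lemma aux_uSeq_integrable (a : ℕ → ℝ) (n : ℕ) : Integrable (uSeq a n) := by
  induction n with
  | zero => exact aux_Hfun_integrable _
  | succ n ih => exact aux_conv_integrable _ _ ih (aux_Hfun_integrable _)

lemma aux_hasDerivAt (f : ℝ → ℝ) (hf : Integrable f) (b : ℝ) (hb : 0 < b) (x : ℝ)
    (h1 : ContinuousAt f x) (h2 : ContinuousAt f (x - b)) :
    HasDerivAt (convFun f (Hfun b)) ((f x - f (x - b)) / b) x := by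
  have key : convFun f (Hfun b) =
      fun y => ((∫ t in (0:ℝ)..y, f t) - ∫ t in (0:ℝ)..(y - b), f t) / b := by
    ext y
    rw [aux_convFun_eq f b hb, intervalIntegral.integral_interval_sub_left]
    · exact hf.intervalIntegrable
    · exact hf.intervalIntegrable
  rw [key]
  have d1 : HasDerivAt (fun y => ∫ t in (0:ℝ)..y, f t) (f x) x :=
    intervalIntegral.integral_hasDerivAt_right hf.intervalIntegrable
      hf.aestronglyMeasurable.stronglyMeasurableAtFilter h1
  have d2 : HasDerivAt (fun y => ∫ t in (0:ℝ)..y, f t) (f (x - b)) (x - b) :=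
    intervalIntegral.integral_hasDerivAt_right hf.intervalIntegrable
      hf.aestronglyMeasurable.stronglyMeasurableAtFilter h2
  exact (d1.sub (d2.comp_sub_const x b)).div_const b

lemma aux_deriv_step (n : ℕ) (f : ℝ → ℝ) (hf : Integrable f) (b : ℝ) (hb : 0 < b)
    (E : Finset ℝ) (hE : ∀ x ∉ (E : Set ℝ), ContDiffAt ℝ (n : ℕ∞) f x) (x : ℝ)
    (hx : x ∉ (E : Set ℝ)) (hx' : x - b ∉ (E : Set ℝ)) :
    ContDiffAt ℝ ((n + 1 : ℕ) : ℕ∞) (convFun f (Hfun b)) x ∧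
    iteratedDeriv (n + 1) (convFun f (Hfun b)) x =
      (iteratedDeriv n f x - iteratedDeriv n f (x - b)) / b := by
  have hEo : IsOpen ((E : Set ℝ)ᶜ) := E.finite_toSet.isClosed.isOpen_compl
  set O : Set ℝ := (E : Set ℝ)ᶜ ∩ (fun y => y - b) ⁻¹' (E : Set ℝ)ᶜ with hO
  have hOo : IsOpen O := hEo.inter (hEo.preimage (by fun_prop))
  have hxO : x ∈ O := ⟨hx, hx'⟩
  have hd : ∀ y ∈ O, HasDerivAt (convFun f (Hfun b)) ((f y - f (y - b)) / b) y := fun y hy =>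
    aux_hasDerivAt f hf b hb y (hE y hy.1).continuousAt (hE _ hy.2).continuousAt
  have hs : ∀ y ∈ O, ContDiffAt ℝ (n : ℕ∞) (fun z => f (z - b)) y := fun y hy =>
    ContDiffAt.comp y (g := f) (f := fun z => z - b) (hE _ hy.2) (by fun_prop)
  have hg : ∀ y ∈ O, ContDiffAt ℝ (n : ℕ∞) (fun z => (f z - f (z - b)) / b) y := fun y hy =>
    ((hE y hy.1).sub (hs y hy)).div_const b
  constructor
  · have : ContDiffOn ℝ ((n : ℕ∞) + 1) (convFun f (Hfun b)) O := by
      rw [contDiffOn_succ_iff_deriv_of_isOpen hOo]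
      refine ⟨fun y hy => (hd y hy).differentiableAt.differentiableWithinAt, by simp, ?_⟩
      refine ContDiffOn.congr (fun y hy => (hg y hy).contDiffWithinAt) ?_
      exact fun y hy => (hd y hy).deriv
    have := this.contDiffAt (hOo.mem_nhds hxO)
    simpa using this
  · rw [iteratedDeriv_succ']
    have he : deriv (convFun f (Hfun b)) =ᶠ[nhds x] fun z => b⁻¹ * (f z - f (z - b)) := by
      filter_upwards [hOo.mem_nhds hxO] with y hy
      rw [(hd y hy).deriv]; ring
    have hs' := hs x hxO
    have hf' := hE x hx
    rw [he.iteratedDeriv_eq, iteratedDeriv_const_mul_field, iteratedDeriv_fun_sub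
      (by simpa using hf') (by simpa using hs'), iteratedDeriv_comp_sub_const]
    ring

lemma aux_ind (s A b K x : ℝ) (hb : 0 < b) (hbA : b ≤ A) (h1 : x ≠ s + b) (h2 : x ≠ s + A) :
    indicator (Icc s (s + A)) (fun _ => K) x - indicator (Icc s (s + A)) (fun _ => K) (x - b) =
    indicator (Icc s (s + b)) (fun _ => K) x -
      indicator (Icc (s + A) (s + A + b)) (fun _ => K) x := by
  simp only [indicator_apply, mem_Icc]
  rcases lt_or_gt_of_ne h1 with h1 | h1 <;> rcases lt_or_gt_of_ne h2 with h2 | h2 <;>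
  split_ifs <;> grind

lemma aux_main (c : ℝ) (hc : c ∈ Set.Ioo (0:ℝ) 1)
    (a : ℕ → ℝ) (ha : ∀ n, 0 < a n) (hmono : Antitone a) (hsum : Summable a)
    (hsep : SepCond c a) (n : ℕ) :
    ∃ (E : Finset ℝ) (t : ℕ → ℝ) (sgn : ℕ → ℝ),
      t 0 = 0 ∧
      (∀ j < 2 ^ n, sgn j = 1 ∨ sgn j = -1) ∧
      (∀ i < 2 ^ n, ∀ j < 2 ^ n, i ≠ j →
        t i + ∑' k, a (n + k) < t j ∨ t j + ∑' k, a (n + k) < t i) ∧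
      ∀ x ∉ (E : Set ℝ),
        ContDiffAt ℝ (n : ℕ∞) (uSeq a n) x ∧
        iteratedDeriv n (uSeq a n) x =
          ∑ j ∈ Finset.range (2 ^ n),
            sgn j * Set.indicator (Set.Icc (t j) (t j + a n))
              (fun _ => (∏ i ∈ Finset.range (n + 1), a i)⁻¹) x := by
  induction n with
  | zero =>
    refine ⟨{0, a 0}, fun _ => 0, fun _ => 1, rfl, by simp, ?_, ?_⟩
    · intro i hi j hj hij
      simp at hi hj
      omega
    · intro x hx
      simp only [Finset.coe_insert, Finset.coe_singleton, mem_insert_iff, mem_singleton_iff,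
        not_or] at hx
      constructor
      · have : ∃ k : ℝ, uSeq a 0 =ᶠ[nhds x] fun _ => k := by
          by_cases h : x ∈ Ioo 0 (a 0)
          · refine ⟨1 / a 0, ?_⟩
            filter_upwards [isOpen_Ioo.mem_nhds h] with y hy
            simp [uSeq, Hfun, indicator_of_mem (Ioo_subset_Icc_self hy)]
          · refine ⟨0, ?_⟩
            have h' : x ∈ (Icc 0 (a 0))ᶜ := fun h' =>
              h ⟨lt_of_le_of_ne h'.1 (Ne.symm hx.1), lt_of_le_of_ne h'.2 hx.2⟩
            filter_upwards [isClosed_Icc.isOpen_compl.mem_nhds h'] with y hy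
            simp only [uSeq, Hfun]
            exact indicator_of_notMem hy (fun _ => 1 / a 0)
        obtain ⟨k, hk⟩ := this
        exact contDiffAt_const.congr_of_eventuallyEq hk
      · simp [uSeq, Hfun]
  | succ n ih =>
    obtain ⟨E, t, sgn, h0, hsgn, hdis, hder⟩ := ih
    have hS : ∑' k, a (n + k) = a n + ∑' k, a (n + 1 + k) := by
      have hs' : Summable fun k => a (n + k) := by
        simpa [add_comm] using (summable_nat_add_iff n).2 hsum
      rw [hs'.tsum_eq_zero_add]
      simp [add_assoc, add_comm 1]
    have hlt : ∑' k, a (n + 1 + k) < a n := by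
      have := hsep n
      nlinarith [ha n, hc.1]
    have hpos : 0 ≤ ∑' k, a (n + 1 + k) := tsum_nonneg fun k => (ha _).le
    rw [hS] at hdis
    set S := ∑' k, a (n + 1 + k) with hSdef
    refine ⟨E ∪ E.image (· + a (n+1)) ∪ (Finset.range (2^n)).image (fun j => t j + a (n+1)) ∪
      (Finset.range (2^n)).image (fun j => t j + a n),
      fun j => if j < 2 ^ n then t j else t (j - 2 ^ n) + a n,
      fun j => if j < 2 ^ n then sgn j else - sgn (j - 2 ^ n), ?_, ?_, ?_, ?_⟩
    · simp [h0]
    · intro j hj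
      rw [pow_succ] at hj
      dsimp only
      split_ifs with h
      · exact hsgn j h
      · rcases hsgn (j - 2 ^ n) (by omega) with h | h <;> simp [h]
    · intro i hi j hj hij
      rw [pow_succ] at hi hj
      have han := ha n
      dsimp only
      split_ifs with h1 h2 h2
      · rcases hdis i h1 j h2 hij with h | h
        · left; linarith
        · right; linarith
      · by_cases he : i = j - 2 ^ n
        · left; rw [← he]; linarith
        · rcases hdis i h1 (j - 2 ^ n) (by omega) he with h | h
          · left; linarith
          · right; linarith
      · by_cases he : i - 2 ^ n = j
        · right; rw [← he]; linarith
        · rcases hdis (i - 2 ^ n) (by omega) j h2 he with h | h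
          · left; linarith
          · right; linarith
      · rcases hdis (i - 2 ^ n) (by omega) (j - 2 ^ n) (by omega) (by omega) with h | h
        · left; linarith
        · right; linarith
    · intro x hx
      simp only [Finset.coe_union, Finset.coe_image, mem_union, not_or, mem_image,
        Finset.mem_coe, Finset.mem_range, not_exists, not_and] at hx
      obtain ⟨⟨⟨hx1, hx2⟩, hx3⟩, hx4⟩ := hx
      have hxb : x - a (n+1) ∉ (E : Set ℝ) := fun h => hx2 _ h (by ring)
      have hstep := aux_deriv_step n (uSeq a n) (aux_uSeq_integrable a n) (a (n+1)) (ha _) E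
        (fun y hy => (hder y hy).1) x hx1 hxb
      refine ⟨hstep.1, ?_⟩
      have h2 := hstep.2
      rw [(hder x hx1).2, (hder _ hxb).2] at h2
      refine h2.trans ?_
      rw [pow_succ, mul_two, Finset.sum_range_add, ← Finset.sum_sub_distrib, Finset.sum_div,
        ← Finset.sum_add_distrib]
      refine Finset.sum_congr rfl fun j hj => ?_
      have hj' := Finset.mem_range.1 hj
      have hi := aux_ind (t j) (a n) (a (n+1)) (∏ i ∈ Finset.range (n + 1), a i)⁻¹ x (ha _)
        (hmono (Nat.le_succ n)) (fun h => hx3 j hj' h.symm) (fun h => hx4 j hj' h.symm)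
      have hK : ∀ s : Set ℝ, indicator s (fun _ => (∏ i ∈ Finset.range (n + 1 + 1), a i)⁻¹) x =
          indicator s (fun _ => (∏ i ∈ Finset.range (n + 1), a i)⁻¹) x / a (n+1) := by
        intro s
        rw [Finset.prod_range_succ _ (n+1)]
        by_cases hxs : x ∈ s
        · simp only [indicator_of_mem hxs]; rw [mul_inv]; ring
        · simp [indicator_of_notMem hxs]
      rw [hK, hK, ← mul_sub, hi]
      simp only [hj', if_true, Nat.not_lt.2 (Nat.le_add_right _ _), if_false,
        Nat.add_sub_cancel_left]
      ring

/-- structure of the top derivative of `u_n`. Off a finite exceptional set,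
`u_n` is `n` times differentiable and its `n`-th derivative is a sum of `2^n` signed copies of
`(a_0⋯a_n)⁻¹` times indicators of pairwise disjoint intervals of length `a_n`, the leftmost
being `[0, a_n]`. -/
theorem uSeq_top_derivative_structure (c : ℝ) (hc : c ∈ Set.Ioo (0:ℝ) 1)
    (a : ℕ → ℝ) (ha : ∀ n, 0 < a n) (hmono : Antitone a) (hsum : Summable a)
    (hsep : SepCond c a) (n : ℕ) :
    ∃ (E : Finset ℝ) (t : ℕ → ℝ) (sgn : ℕ → ℝ),
      t 0 = 0 ∧
      (∀ j < 2 ^ n, sgn j = 1 ∨ sgn j = -1) ∧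
      (∀ i < 2 ^ n, ∀ j < 2 ^ n, i ≠ j →
        Disjoint (Set.Icc (t i) (t i + a n)) (Set.Icc (t j) (t j + a n))) ∧
      ∀ x ∉ (E : Set ℝ),
        ContDiffAt ℝ (n : ℕ∞) (uSeq a n) x ∧
        iteratedDeriv n (uSeq a n) x =
          ∑ j ∈ Finset.range (2 ^ n),
            sgn j * Set.indicator (Set.Icc (t j) (t j + a n))
              (fun _ => (∏ i ∈ Finset.range (n + 1), a i)⁻¹) x := by
  obtain ⟨E, t, sgn, h0, hsgn, hdis, hder⟩ := aux_main c hc a ha hmono hsum hsep n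
  refine ⟨E, t, sgn, h0, hsgn, fun i hi j hj hij => ?_, hder⟩
  have hs' : Summable fun k => a (n + k) := by
    simpa [add_comm] using (summable_nat_add_iff n).2 hsum
  have hle : a n ≤ ∑' k, a (n + k) := hs'.le_tsum 0 (fun k _ => (ha _).le)
  rw [Set.disjoint_left]
  rintro x ⟨h1, h2⟩ ⟨h3, h4⟩
  rcases hdis i hi j hj hij with h | h <;> linarith
end

section
/- Let c ∈ (0,1), let p ∈ (0,1), and let (a_n)_{n≥0} be a decreasing summable sequence of positive reals satisfying ∑_{j>k} a_j ≤ (1-c) a_k for all k ≥ 0. For a > 0 let H_a = (1/a)·χ_{[0,a]}, let u_n = H_{a_0} * ⋯ * H_{a_n}, and let u be the uniform limit of the u_n (which exists, is smooth, has integral 1, and is supported on [0, ∑_j a_j]). Then for every n ≥ 0 one has the equality ‖u^{(n)}‖_∞ = 1/(a_0 a_1 ⋯ a_n). -/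
open Real MeasureTheory Filter Set

/-- Averaging operator: convolution with `H_a`. -/
noncomputable def avg (a : ℝ) (f : ℝ → ℝ) : ℝ → ℝ := fun x => a⁻¹ * ∫ t in (0:ℝ)..a, f (x - t)

def GoodFun (f : ℝ → ℝ) : Prop := Measurable f ∧ ∃ B, ∀ x, |f x| ≤ B

theorem GoodFun.ii {f : ℝ → ℝ} (hf : GoodFun f) (b c : ℝ) : IntervalIntegrable f volume b c := by
  obtain ⟨hm, B, hB⟩ := hf
  refine (_root_.intervalIntegrable_const (c := B)).mono_fun hm.aestronglyMeasurable ?_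
  refine Filter.Eventually.of_forall fun x => ?_
  simpa using (hB x).trans (le_abs_self B)

theorem GoodFun.shift {f : ℝ → ℝ} (hf : GoodFun f) (x : ℝ) : GoodFun (fun t => f (x - t)) :=
  ⟨hf.1.comp (by fun_prop), hf.2.imp fun _ h t => h _⟩

theorem goodFun_const (k : ℝ) : GoodFun (fun _ => k) := ⟨measurable_const, |k|, fun _ => le_rfl⟩

theorem avg_const {a : ℝ} (ha : 0 < a) (k x : ℝ) : avg a (fun _ => k) x = k := by
  simp [avg, ha.ne']

theorem avg_dist {a : ℝ} (ha : 0 < a) {f g : ℝ → ℝ} (hf : GoodFun f) (hg : GoodFun g) (x y ε : ℝ)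
    (h : ∀ t, 0 ≤ t → t ≤ a → |f (x - t) - g (y - t)| ≤ ε) :
    |avg a f x - avg a g y| ≤ ε := by
  unfold avg
  rw [← mul_sub, ← intervalIntegral.integral_sub ((hf.shift x).ii _ _) ((hg.shift y).ii _ _),
    abs_mul, abs_of_pos (inv_pos.2 ha)]
  have := intervalIntegral.norm_integral_le_of_norm_le_const (a := 0) (b := a) (C := ε)
    (f := fun t => f (x - t) - g (y - t)) (by
      intro t ht
      rw [Set.uIoc_of_le ha.le] at ht
      exact h t ht.1.le ht.2)
  rw [Real.norm_eq_abs, sub_zero, abs_of_pos ha] at this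
  calc _ ≤ a⁻¹ * (ε * a) := by gcongr
    _ = ε := by field_simp

theorem avg_near {a : ℝ} (ha : 0 < a) {f : ℝ → ℝ} (hf : GoodFun f) (x k ε : ℝ)
    (h : ∀ t, 0 ≤ t → t ≤ a → |f (x - t) - k| ≤ ε) :
    |avg a f x - k| ≤ ε := by
  have := avg_dist ha hf (goodFun_const k) x x ε h
  rwa [avg_const ha] at this

theorem avg_eq_of {a : ℝ} (ha : 0 < a) {f : ℝ → ℝ} (hf : GoodFun f) (x k : ℝ)
    (h : ∀ t, 0 ≤ t → t ≤ a → f (x - t) = k) : avg a f x = k := by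
  have := avg_near ha hf x k 0 (fun t h0 h1 => by simp [h t h0 h1])
  exact sub_eq_zero.1 (abs_nonpos_iff.1 this)

theorem avg_bdd {a : ℝ} (ha : 0 < a) {f : ℝ → ℝ} (hf : GoodFun f) {B : ℝ}
    (h : ∀ x, |f x| ≤ B) (x : ℝ) : |avg a f x| ≤ B := by
  have := avg_near ha hf x 0 B (fun t h0 h1 => by simpa using h _)
  simpa using this

theorem avg_eq_int (a : ℝ) (f : ℝ → ℝ) (x : ℝ) : avg a f x = a⁻¹ * ∫ t in (x - a)..x, f t := by
  unfold avg
  rw [intervalIntegral.integral_comp_sub_left]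
  simp

theorem avg_lip {a : ℝ} (ha : 0 < a) {f : ℝ → ℝ} (hf : GoodFun f) {B : ℝ}
    (h : ∀ x, |f x| ≤ B) (x y : ℝ) : |avg a f x - avg a f y| ≤ (a⁻¹ * (2 * B)) * |x - y| := by
  rw [avg_eq_int, avg_eq_int, ← mul_sub,
    intervalIntegral.integral_interval_sub_interval_comm' (hf.ii _ _) (hf.ii _ _) (hf.ii _ _),
    abs_mul, abs_of_pos (inv_pos.2 ha), mul_assoc]
  have h1 := intervalIntegral.norm_integral_le_of_norm_le_const (a := y) (b := x) (C := B)
    (f := f) (fun t _ => h t)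
  have h2 := intervalIntegral.norm_integral_le_of_norm_le_const (a := y - a) (b := x - a) (C := B)
    (f := f) (fun t _ => h t)
  rw [Real.norm_eq_abs] at h1 h2
  rw [show x - a - (y - a) = x - y by ring] at h2
  gcongr
  refine (abs_sub _ _).trans ?_
  linarith

theorem avg_good {a : ℝ} (ha : 0 < a) {f : ℝ → ℝ} (hf : GoodFun f) :
    GoodFun (avg a f) := by
  obtain ⟨B, hB⟩ := hf.2
  refine ⟨?_, B, avg_bdd ha hf hB⟩
  have hB0 : 0 ≤ B := (abs_nonneg _).trans (hB 0)
  have : LipschitzWith (Real.toNNReal (a⁻¹ * (2 * B))) (avg a f) := by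
    refine LipschitzWith.of_dist_le_mul fun x y => ?_
    rw [Real.coe_toNNReal _ (by positivity), Real.dist_eq, Real.dist_eq]
    exact avg_lip ha hf hB x y
  exact this.continuous.measurable

theorem avg_comm {a b : ℝ} (ha : 0 < a) (hb : 0 < b) {f : ℝ → ℝ} (hf : GoodFun f) :
    avg a (avg b f) = avg b (avg a f) := by
  ext x
  unfold avg
  simp_rw [intervalIntegral.integral_const_mul]
  rw [MeasureTheory.intervalIntegral_intervalIntegral_swap]
  · simp_rw [sub_right_comm]
    ring
  · obtain ⟨hm, B, hB⟩ := hf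
    have hfin : IsFiniteMeasure ((volume : Measure (ℝ × ℝ)).restrict (uIoc 0 a ×ˢ uIoc 0 b)) := by
      rw [Set.uIoc_of_le ha.le, Set.uIoc_of_le hb.le, Measure.volume_eq_prod,
        ← Measure.prod_restrict]
      infer_instance
    refine MeasureTheory.Integrable.mono' (integrable_const B) ?_ ?_
    · apply Measurable.aestronglyMeasurable
      apply hm.comp
      fun_prop
    · exact Filter.Eventually.of_forall fun z => hB _

theorem convFun_comm (f g : ℝ → ℝ) : convFun f g = convFun g f := by
  ext x
  unfold convFun
  rw [← integral_sub_left_eq_self (fun t => f t * g (x - t)) volume x]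
  simp [mul_comm]

theorem Hfun_conv {a : ℝ} (ha : 0 < a) (f : ℝ → ℝ) : convFun (Hfun a) f = avg a f := by
  ext x
  unfold convFun avg Hfun
  rw [intervalIntegral.integral_of_le ha.le, ← integral_Icc_eq_integral_Ioc,
    ← integral_const_mul, ← integral_indicator measurableSet_Icc]
  congr 1
  ext t
  by_cases ht : t ∈ Icc 0 a <;> simp [ht]

theorem Hfun_good {a : ℝ} (ha : 0 < a) : GoodFun (Hfun a) := by
  refine ⟨measurable_const.indicator measurableSet_Icc, 1 / a, fun x => ?_⟩
  unfold Hfun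
  by_cases hx : x ∈ Icc 0 a
  · simp [hx, abs_of_pos ha]
  · simp [hx, ha.le]

theorem uSeq_succ {a : ℕ → ℝ} (ha : ∀ n, 0 < a n) (n : ℕ) :
    uSeq a (n + 1) = avg (a (n + 1)) (uSeq a n) := by
  rw [uSeq, convFun_comm, Hfun_conv (ha _)]

theorem uSeq_good {a : ℕ → ℝ} (ha : ∀ n, 0 < a n) (n : ℕ) : GoodFun (uSeq a n) := by
  induction n with
  | zero => exact Hfun_good (ha 0)
  | succ n ih => rw [uSeq_succ ha]; exact avg_good (ha _) ih

theorem uSeq_succ' {a : ℕ → ℝ} (ha : ∀ n, 0 < a n) (n : ℕ) :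
    uSeq a (n + 1) = avg (a 0) (uSeq (fun i => a (i + 1)) n) := by
  induction n with
  | zero => rw [uSeq, uSeq, uSeq, Hfun_conv (ha _)]
  | succ n ih =>
    rw [uSeq_succ ha, ih, uSeq_succ (fun n => ha (n + 1)), avg_comm (ha _) (ha _)]
    exact uSeq_good (fun n => ha (n + 1)) n

theorem uSeq_bdd {a : ℕ → ℝ} (ha : ∀ n, 0 < a n) (n : ℕ) (x : ℝ) : |uSeq a n x| ≤ (a 0)⁻¹ := by
  induction n generalizing x with
  | zero =>
    unfold uSeq Hfun
    by_cases hx : x ∈ Icc 0 (a 0)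
    · simp [hx, abs_of_pos (ha 0)]
    · simp [hx, (ha 0).le]
  | succ n ih => rw [uSeq_succ ha]; exact avg_bdd (ha _) (uSeq_good ha n) ih x

theorem uSeq_supp {a : ℕ → ℝ} (ha : ∀ n, 0 < a n) (n : ℕ) (x : ℝ)
    (hx : x < 0 ∨ ∑ i ∈ Finset.range (n + 1), a i < x) : uSeq a n x = 0 := by
  induction n generalizing x with
  | zero =>
    unfold uSeq Hfun
    apply indicator_of_notMem
    simp only [zero_add, Finset.range_one, Finset.sum_singleton] at hx
    rintro ⟨h1, h2⟩
    rcases hx with h | h <;> linarith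
  | succ n ih =>
    rw [uSeq_succ ha]
    refine avg_eq_of (ha _) (uSeq_good ha n) x 0 fun t h0 h1 => ih _ ?_
    rw [Finset.sum_range_succ] at hx
    rcases hx with h | h
    · left; linarith
    · right; linarith

theorem uSeq_plateau {a : ℕ → ℝ} (ha : ∀ n, 0 < a n) (n : ℕ) (x : ℝ)
    (h1 : ∑ i ∈ Finset.range n, a (i + 1) ≤ x) (h2 : x ≤ a 0) : uSeq a n x = (a 0)⁻¹ := by
  induction n generalizing x with
  | zero =>
    unfold uSeq Hfun
    rw [indicator_of_mem, one_div]
    exact ⟨by simpa using h1, h2⟩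
  | succ n ih =>
    rw [uSeq_succ ha]
    rw [Finset.sum_range_succ] at h1
    exact avg_eq_of (ha _) (uSeq_good ha n) x _ fun t h3 h4 => ih _ (by linarith) (by linarith)

theorem uSeq_lip {a : ℕ → ℝ} (ha : ∀ n, 0 < a n) (n : ℕ) (x y : ℝ) :
    |uSeq a (n + 1) x - uSeq a (n + 1) y| ≤ ((a 1)⁻¹ * (2 * (a 0)⁻¹)) * |x - y| := by
  induction n generalizing x y with
  | zero =>
    rw [uSeq_succ ha]
    exact avg_lip (ha _) (uSeq_good ha 0) (uSeq_bdd ha 0) x y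
  | succ n ih =>
    rw [uSeq_succ ha]
    refine avg_dist (ha _) (uSeq_good ha _) (uSeq_good ha _) _ _ _ fun t _ _ => ?_
    refine (ih _ _).trans_eq ?_
    congr 2
    ring

theorem uSeq_lim {a : ℕ → ℝ} (ha : ∀ n, 0 < a n) (hsum : Summable a) :
    ∃ w : ℝ → ℝ, TendstoUniformly (fun n => uSeq a n) w atTop ∧ Continuous w := by
  set L := (a 1)⁻¹ * (2 * (a 0)⁻¹) with hL
  have hL0 : 0 ≤ L := by have := ha 0; have := ha 1; positivity
  have hd : ∀ x n, dist (uSeq a (n + 1) x) (uSeq a (n + 1 + 1) x) ≤ L * a (n + 2) := by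
    intro x n
    rw [dist_comm, Real.dist_eq, uSeq_succ ha (n + 1)]
    refine avg_near (ha _) (uSeq_good ha _) _ _ _ fun t h0 h1 => (uSeq_lip ha n _ _).trans ?_
    rw [← hL, show x - t - x = -t by ring, abs_neg, abs_of_nonneg h0]
    gcongr
  have hs : Summable (fun n => L * a (n + 2)) := ((summable_nat_add_iff 2).2 hsum).mul_left L
  have hc : ∀ x, ∃ l, Tendsto (fun n => uSeq a (n + 1) x) atTop (nhds l) := fun x =>
    cauchySeq_tendsto_of_complete (cauchySeq_of_dist_le_of_summable _ (hd x) hs)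
  choose w hw using hc
  have hT : TendstoUniformly (fun n => uSeq a (n + 1)) w atTop := by
    rw [Metric.tendstoUniformly_iff]
    intro ε hε
    have ht := tendsto_sum_nat_add (fun n => L * a (n + 2))
    filter_upwards [ht.eventually (gt_mem_nhds hε)] with n hn x
    rw [dist_comm]
    refine (dist_le_tsum_of_dist_le_of_tendsto _ (hd x) hs (hw x) n).trans_lt ?_
    simpa only [add_comm n] using hn
  refine ⟨w, ?_, ?_⟩
  · rw [Metric.tendstoUniformly_iff] at hT ⊢
    intro ε hε
    have h1 := hT ε hε
    rw [eventually_atTop] at h1 ⊢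
    obtain ⟨N, hN⟩ := h1
    refine ⟨N + 1, fun n hn => ?_⟩
    obtain ⟨m, rfl⟩ : ∃ m, n = m + 1 := ⟨n - 1, by omega⟩
    exact hN m (by omega)
  · refine hT.continuous (Filter.Frequently.of_forall fun n => ?_)
    have : LipschitzWith (Real.toNNReal L) (uSeq a (n + 1)) := by
      refine LipschitzWith.of_dist_le_mul fun x y => ?_
      rw [Real.coe_toNNReal _ hL0, Real.dist_eq, Real.dist_eq]
      exact uSeq_lip ha n x y
    exact this.continuous

theorem lim_supp {a : ℕ → ℝ} (ha : ∀ n, 0 < a n) (hsum : Summable a) {w : ℝ → ℝ}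
    (hw : TendstoUniformly (fun n => uSeq a n) w atTop) (x : ℝ)
    (hx : x < 0 ∨ ∑' i, a i < x) : w x = 0 := by
  refine tendsto_nhds_unique (hw.tendsto_at x) ?_
  refine tendsto_const_nhds.congr fun n => (uSeq_supp ha n x ?_).symm
  exact hx.imp id fun h => (hsum.sum_le_tsum _ fun i _ => (ha i).le).trans_lt h

theorem main_aux (n : ℕ) : ∀ (a : ℕ → ℝ), (∀ n, 0 < a n) → Summable a →
    (∀ k, ∑' j, a (k + 1 + j) < a k) → ∀ u : ℝ → ℝ,
    TendstoUniformly (fun n => uSeq a n) u atTop → ContDiff ℝ (⊤ : ℕ∞) u →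
    (∀ x, |iteratedDeriv n u x| ≤ (∏ i ∈ Finset.range (n + 1), a i)⁻¹) ∧
    ∃ x, |iteratedDeriv n u x| = (∏ i ∈ Finset.range (n + 1), a i)⁻¹ := by
  induction n with
  | zero =>
    intro a ha hsum hsep u hu hsm
    simp only [iteratedDeriv_zero, zero_add, Finset.range_one, Finset.prod_singleton]
    refine ⟨fun x => ?_, a 0, ?_⟩
    · exact le_of_tendsto (hu.tendsto_at x).abs (Filter.Eventually.of_forall fun n => uSeq_bdd ha n x)
    · have : u (a 0) = (a 0)⁻¹ := by
        refine tendsto_nhds_unique (hu.tendsto_at _) ?_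
        refine tendsto_const_nhds.congr fun n => (uSeq_plateau ha n _ ?_ le_rfl).symm
        refine le_trans ?_ (hsep 0).le
        simp only [zero_add, add_comm 1]
        exact ((summable_nat_add_iff 1).2 hsum).sum_le_tsum _ fun i _ => (ha _).le
      rw [this, abs_of_pos (inv_pos.2 (ha 0))]
  | succ n ih =>
    intro a ha hsum hsep u hu hsm
    set b : ℕ → ℝ := fun i => a (i + 1) with hb
    have hbp : ∀ n, 0 < b n := fun n => ha _
    have hbs : Summable b := (summable_nat_add_iff 1).2 hsum
    obtain ⟨w, hw, hwc⟩ := uSeq_lim hbp hbs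
    have hr : ∑' i, b i < a 0 := by
      have := hsep 0
      simpa only [zero_add, add_comm 1] using this
    have hw0 := lim_supp hbp hbs hw
    have hwb : ∀ x, |w x| ≤ (b 0)⁻¹ := fun x =>
      le_of_tendsto (hw.tendsto_at x).abs (Filter.Eventually.of_forall fun n => uSeq_bdd hbp n x)
    have hwg : GoodFun w := ⟨hwc.measurable, _, hwb⟩
    have huw : u = avg (a 0) w := by
      ext x
      refine tendsto_nhds_unique ((hu.tendsto_at x).comp (tendsto_add_atTop_nat 1)) ?_
      rw [Metric.tendsto_nhds]
      intro ε hε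
      filter_upwards [Metric.tendstoUniformly_iff.1 hw (ε / 2) (half_pos hε)] with n hn
      simp only [Function.comp]
      rw [uSeq_succ' ha, Real.dist_eq]
      refine (avg_dist (ha 0) (uSeq_good hbp n) hwg x x (ε / 2) fun t _ _ => ?_).trans_lt
        (half_lt_self hε)
      have := hn (x - t)
      rw [dist_comm, Real.dist_eq] at this
      exact this.le
    have hderiv : deriv u = fun x => (a 0)⁻¹ * (w x - w (x - a 0)) := by
      ext x
      rw [huw]
      have h1 : avg (a 0) w = fun x => (a 0)⁻¹ * ((∫ t in (0:ℝ)..x, w t) - ∫ t in (0:ℝ)..(x - a 0), w t) := by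
        ext y
        rw [avg_eq_int, intervalIntegral.integral_interval_sub_left (hwg.ii _ _) (hwg.ii _ _)]
      rw [h1]
      have h2 : ∀ y, HasDerivAt (fun x => ∫ t in (0:ℝ)..x, w t) (w y) y := fun y =>
        intervalIntegral.integral_hasDerivAt_right (hwg.ii _ _)
          (hwc.stronglyMeasurableAtFilter _ _) hwc.continuousAt
      have h3 := (h2 (x - a 0)).comp_sub_const x (a 0)
      exact (((h2 x).sub h3).const_mul _).deriv
    have hdsm : ContDiff ℝ (⊤ : ℕ∞) (deriv u) := by
      have : ContDiff ℝ ((⊤ : ℕ∞) + 1) u := by simpa using hsm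
      exact (contDiff_succ_iff_deriv.1 this).2.2
    have hev1 : ∀ x, x < 0 → w =ᶠ[nhds x] fun _ => 0 := fun x hx => by
      filter_upwards [Iio_mem_nhds hx] with y hy using hw0 y (Or.inl hy)
    have hev2 : ∀ x, a 0 ≤ x → w =ᶠ[nhds x] fun _ => 0 := fun x hx => by
      filter_upwards [Ioi_mem_nhds (hr.trans_le hx)] with y hy using hw0 y (Or.inr hy)
    have hwsm : ContDiff ℝ (⊤ : ℕ∞) w := by
      rw [contDiff_iff_contDiffAt]
      intro x
      rcases lt_or_ge x (a 0) with hx | hx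
      · have h1 : ContDiffAt ℝ (⊤ : ℕ∞) (fun y => a 0 * deriv u y) x :=
          (contDiff_const.mul hdsm).contDiffAt
        refine h1.congr_of_eventuallyEq ?_
        filter_upwards [Iio_mem_nhds hx] with y hy
        have hy' : y < a 0 := hy
        rw [hderiv]
        simp only
        rw [hw0 (y - a 0) (Or.inl (by linarith)), sub_zero, mul_inv_cancel_left₀ (ha 0).ne']
      · exact contDiffAt_const.congr_of_eventuallyEq (hev2 x hx)
    have hz1 : ∀ x, x < 0 → iteratedDeriv n w x = 0 := fun x hx => by
      rw [((hev1 x hx).iteratedDeriv n).eq_of_nhds, iteratedDeriv_fun_const_zero]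
    have hz2 : ∀ x, a 0 ≤ x → iteratedDeriv n w x = 0 := fun x hx => by
      rw [((hev2 x hx).iteratedDeriv n).eq_of_nhds, iteratedDeriv_fun_const_zero]
    have hkey : ∀ x, iteratedDeriv (n + 1) u x =
        (a 0)⁻¹ * (iteratedDeriv n w x - iteratedDeriv n w (x - a 0)) := by
      intro x
      have hle : ((n : ℕ) : WithTop ℕ∞) ≤ ((⊤ : ℕ∞) : WithTop ℕ∞) := by
        exact_mod_cast le_top
      have hwn : ContDiff ℝ n w := hwsm.of_le hle
      have hwn2 : ContDiff ℝ n (fun y => w (y - a 0)) := hwn.comp (contDiff_id.sub contDiff_const)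
      rw [iteratedDeriv_succ', hderiv, iteratedDeriv_const_mul_field,
        iteratedDeriv_fun_sub hwn.contDiffAt hwn2.contDiffAt, iteratedDeriv_comp_sub_const]
    obtain ⟨hle, x0, hx0⟩ := ih b hbp hbs (fun k => by
      have := hsep (k + 1)
      simp only [hb]
      convert this using 4
      ring) w hw hwsm
    have hprod : (∏ i ∈ Finset.range (n + 1 + 1), a i)⁻¹
        = (a 0)⁻¹ * (∏ i ∈ Finset.range (n + 1), b i)⁻¹ := by
      rw [Finset.prod_range_succ', mul_inv, mul_comm]
    have ha0 := inv_pos.2 (ha 0)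
    rw [hprod]
    refine ⟨fun x => ?_, x0, ?_⟩
    · rw [hkey, abs_mul, abs_of_pos ha0]
      gcongr
      rcases lt_or_ge x (a 0) with hx | hx
      · rw [hz1 (x - a 0) (by linarith), sub_zero]; exact hle x
      · rw [hz2 x hx, zero_sub, abs_neg]; exact hle _
    · have hlt : x0 < a 0 := by
        by_contra hcon
        rw [hz2 x0 (not_lt.1 hcon), abs_zero] at hx0
        have : 0 < (∏ i ∈ Finset.range (n + 1), b i)⁻¹ :=
          inv_pos.2 (Finset.prod_pos fun i _ => hbp i)
        linarith
      rw [hkey, abs_mul, abs_of_pos ha0, hz1 (x0 - a 0) (by linarith), sub_zero, hx0]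

/-- If `u` is the uniform limit of the `u_n` (a smooth function), then
`‖u^(n)‖_∞ = 1/(a_0 a_1 ⋯ a_n)` for every `n`. -/
theorem sup_iteratedDeriv_of_infinite_convolution (c p : ℝ) (hc : c ∈ Set.Ioo (0:ℝ) 1)
    (hp : p ∈ Set.Ioo (0:ℝ) 1)
    (a : ℕ → ℝ) (ha : ∀ n, 0 < a n) (hmono : Antitone a) (hsum : Summable a)
    (hsep : SepCond c a)
    (u : ℝ → ℝ) (hu : TendstoUniformly (fun n => uSeq a n) u Filter.atTop)
    (husmooth : ContDiff ℝ (⊤ : ℕ∞) u) (n : ℕ) :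
    supNorm (iteratedDeriv n u) = (∏ i ∈ Finset.range (n + 1), a i)⁻¹ := by

  have hsep' : ∀ k, ∑' j, a (k + 1 + j) < a k := fun k => by
    have h1 := hsep k
    have h2 := mul_pos hc.1 (ha k)
    linarith
  obtain ⟨h1, x, hx⟩ := main_aux n a ha hsum hsep' u hu husmooth
  unfold supNorm
  refine le_antisymm (ciSup_le h1) ?_
  rw [← hx]
  exact le_ciSup (f := fun x => |iteratedDeriv n u x|) ⟨_, by rintro _ ⟨y, rfl⟩; exact h1 y⟩ x
end

section
/- Let p ∈ (0,1) and let M = (M_k)_{k≥0} satisfy M_k ≥ 1 for all k. Then for every f ∈ L^p(ℝ) there exists a sequence (f_i)_{i≥0} of smooth functions, each with all derivatives in L^p(ℝ) and finite Carleman–Sobolev quasi-norm ‖f_i‖_M, such that: ‖f − f_i‖_p → 0 as i → ∞; sup_{n≥1} ‖f_i^{(n)}‖_p / M_n → 0 as i → ∞; the sequence (f_i) is Cauchy with respect to ‖·‖_M; and ‖f_i‖_M → ‖f‖_p / M_0. In particular L^p(ℝ) embeds canonically and continuously into the completion of the class C = {f smooth : ‖f‖_M < ∞} with respect to ‖·‖_M.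 -/
open Real MeasureTheory Filter Set

namespace LpEmb

instance fact01 : Fact ((0:ℝ) ≤ 1) := ⟨zero_le_one⟩

abbrev Mon := ℝ →o Set.Icc (0:ℝ) 1

lemma Mon.intble (u : Mon) (h x a b : ℝ) (hh : 0 ≤ h) :
    IntervalIntegrable (fun t : ℝ => ((u (x - h * t) : Set.Icc (0:ℝ) 1) : ℝ)) volume a b := by
  apply Antitone.intervalIntegrable
  intro s t hst
  have : u (x - h * t) ≤ u (x - h * s) := u.monotone (by nlinarith)
  exact this

noncomputable def avg (h : ℝ) (hh : 0 ≤ h) (u : Mon) : Mon where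
  toFun x := ⟨∫ t in (0:ℝ)..1, ((u (x - h * t) : Set.Icc (0:ℝ) 1) : ℝ), by
    constructor
    · apply intervalIntegral.integral_nonneg zero_le_one
      intro t _
      exact (u (x - h * t)).2.1
    · have := intervalIntegral.integral_mono_on (zero_le_one) (u.intble h x 0 1 hh)
        (g := fun _ => (1:ℝ)) (by simp) (fun t _ => (u (x - h * t)).2.2)
      simpa using this⟩
  monotone' := by
    intro x y hxy
    apply intervalIntegral.integral_mono_on (zero_le_one) (u.intble h x 0 1 hh)
      (u.intble h y 0 1 hh)
    intro t _
    have : u (x - h * t) ≤ u (y - h * t) := u.monotone (by linarith)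
    exact this

lemma avg_mono (h : ℝ) (hh : 0 ≤ h) {u v : Mon} (huv : u ≤ v) : avg h hh u ≤ avg h hh v := by
  intro x
  apply intervalIntegral.integral_mono_on (zero_le_one) (u.intble h x 0 1 hh)
      (v.intble h x 0 1 hh)
  intro t _
  exact huv (x - h * t)

/-- Indicator of `[c,∞)`. -/
noncomputable def stepC (c : ℝ) : Mon where
  toFun x := if c ≤ x then 1 else 0
  monotone' := by
    intro x y hxy
    dsimp only
    split_ifs with h1 h2
    · exact le_rfl
    · exact absurd (h1.trans hxy) h2
    · exact bot_le (α := Set.Icc (0:ℝ) 1)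
    · exact le_rfl

lemma exists_fixed {α : Type*} [CompleteLattice α] (T : α → α) (hT : Monotone T) (L H : α)
    (hLT : L ≤ T L) (hLH : L ≤ H) (hTH : T H ≤ H) : ∃ g, T g = g ∧ L ≤ g ∧ g ≤ H := by
  let T' : α →o α := ⟨fun y => T y ⊓ H, fun y z hyz => inf_le_inf_right _ (hT hyz)⟩
  have hfix : T (OrderHom.gfp T') ⊓ H = OrderHom.gfp T' := OrderHom.map_gfp T'
  have hLg : L ≤ OrderHom.gfp T' := OrderHom.le_gfp T' (le_inf hLT hLH)
  generalize OrderHom.gfp T' = g at hfix hLg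
  have hgH : g ≤ H := by rw [← hfix]; exact inf_le_right
  refine ⟨g, ?_, hLg, hgH⟩
  have h1 : T g ≤ H := (hT hgH).trans hTH
  rw [inf_eq_left.2 h1] at hfix
  exact hfix

lemma exists_family (h : ℕ → ℝ) (hpos : ∀ k, 0 < h k) (hhalf : ∀ k, h (k+1) ≤ h k / 2) :
    ∃ G : ℕ → ℝ → ℝ, (∀ k, Monotone (G k)) ∧ (∀ k x, 0 ≤ G k x ∧ G k x ≤ 1) ∧
      (∀ k x, x < 0 → G k x = 0) ∧ (∀ k x, 2 * h k ≤ x → G k x = 1) ∧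
      (∀ k x, G k x = ∫ t in (0:ℝ)..1, G (k+1) (x - h k * t)) := by
  let H : ℕ → Mon := fun _ => stepC 0
  let L : ℕ → Mon := fun k => stepC (2 * h k)
  let T : (ℕ → Mon) → (ℕ → Mon) := fun y k => avg (h k) (hpos k).le (y (k+1))
  have hT : Monotone T := by
    intro y z hyz k
    exact avg_mono _ _ (hyz (k+1))
  have hTH : T H ≤ H := by
    intro k x
    by_cases hx : 0 ≤ x
    · have : H k x = 1 := if_pos hx
      rw [this]
      exact le_top (α := Set.Icc (0:ℝ) 1)
    · have e : H k x = 0 := if_neg hx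
      rw [e]
      change (∫ t in (0:ℝ)..1, ((H (k+1) (x - h k * t) : Set.Icc (0:ℝ) 1) : ℝ)) ≤ 0
      have := intervalIntegral.integral_mono_on (zero_le_one) ((H (k+1)).intble (h k) x 0 1 (hpos k).le)
        (g := fun _ => (0:ℝ)) (by simp) (fun t ht => by
          have : H (k+1) (x - h k * t) = 0 := if_neg (by
            have := mul_nonneg (hpos k).le ht.1
            linarith)
          rw [this]; simp)
      simpa using this
  have hLH : L ≤ H := by
    intro k x
    by_cases hx : 2 * h k ≤ x
    · have : H k x = 1 := if_pos (by linarith [hpos k])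
      rw [this]
      exact le_top (α := Set.Icc (0:ℝ) 1)
    · have : L k x = 0 := if_neg hx
      rw [this]
      exact bot_le (α := Set.Icc (0:ℝ) 1)
  have hLT : L ≤ T L := by
    intro k x
    by_cases hx : 2 * h k ≤ x
    · change ((L k x : Set.Icc (0:ℝ) 1) : ℝ) ≤ (∫ t in (0:ℝ)..1, ((L (k+1) (x - h k * t) : Set.Icc (0:ℝ) 1) : ℝ))
      have := intervalIntegral.integral_mono_on (zero_le_one) 
        (f := fun _ => (1:ℝ)) (by simp) ((L (k+1)).intble (h k) x 0 1 (hpos k).le) (fun t ht => by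
          have : L (k+1) (x - h k * t) = 1 := if_pos (by
            have := mul_le_mul_of_nonneg_left ht.2 (hpos k).le
            have := hhalf k
            linarith)
          rw [this]; simp)
      refine le_trans (L k x).2.2 ?_
      simpa using this
    · have : L k x = 0 := if_neg hx
      rw [this]
      exact bot_le (α := Set.Icc (0:ℝ) 1)
  obtain ⟨g, hTg, hLg, hgH⟩ := exists_fixed (α := ℕ → Mon) T hT L H hLT hLH hTH
  refine ⟨fun k x => (g k x : Set.Icc (0:ℝ) 1), ?_, ?_, ?_, ?_, ?_⟩
  · intro k x y hxy
    exact (g k).monotone hxy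
  · intro k x
    exact (g k x).2
  · intro k x hx
    have h1 : g k x ≤ H k x := hgH k x
    have e : H k x = 0 := if_neg (not_le.2 hx)
    rw [e] at h1
    exact le_antisymm h1 (g k x).2.1
  · intro k x hx
    have h1 : L k x ≤ g k x := hLg k x
    have e : L k x = 1 := if_pos hx
    rw [e] at h1
    exact le_antisymm (g k x).2.2 h1
  · intro k x
    have : g k x = T g k x := by rw [hTg]
    exact congrArg Subtype.val this

lemma family_deriv (h : ℕ → ℝ) (hpos : ∀ k, 0 < h k) (G : ℕ → ℝ → ℝ) (hmono : ∀ k, Monotone (G k))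
    (hG : ∀ k x, G k x = ∫ t in (0:ℝ)..1, G (k+1) (x - h k * t)) :
    ∀ k x, HasDerivAt (G k) ((h k)⁻¹ * (G (k+1) x - G (k+1) (x - h k))) x := by
  have hint : ∀ k a b, IntervalIntegrable (G k) volume a b := fun k a b => (hmono k).intervalIntegrable
  have hG2 : ∀ k x, G k x = (h k)⁻¹ * ((∫ t in (0:ℝ)..x, G (k+1) t) - ∫ t in (0:ℝ)..(x - h k), G (k+1) t) := by
    intro k x
    rw [hG, intervalIntegral.integral_comp_sub_mul _ (hpos k).ne', 
      intervalIntegral.integral_interval_sub_left (hint _ _ _) (hint _ _ _)]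
    simp
  have hcont : ∀ k, Continuous (G k) := by
    intro k
    have h1 : Continuous (fun x => ∫ t in (0:ℝ)..x, G (k+1) t) :=
      intervalIntegral.continuous_primitive (hint _) 0
    have : G k = fun x => (h k)⁻¹ * ((∫ t in (0:ℝ)..x, G (k+1) t) - ∫ t in (0:ℝ)..(x - h k), G (k+1) t) :=
      funext (hG2 k)
    rw [this]
    exact continuous_const.mul (h1.sub (h1.comp (continuous_id.sub continuous_const)))
  intro k x
  have : G k = fun x => (h k)⁻¹ * ((∫ t in (0:ℝ)..x, G (k+1) t) - ∫ t in (0:ℝ)..(x - h k), G (k+1) t) :=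
      funext (hG2 k)
  rw [this]
  have h1 : ∀ x, HasDerivAt (fun x => ∫ t in (0:ℝ)..x, G (k+1) t) (G (k+1) x) x := fun x =>
    ((hcont (k+1)).integral_hasStrictDerivAt 0 x).hasDerivAt
  exact ((h1 x).sub ((h1 (x - h k)).comp_sub_const x (h k))).const_mul _

lemma family_contDiff (h : ℕ → ℝ) (G : ℕ → ℝ → ℝ)
    (hd : ∀ k x, HasDerivAt (G k) ((h k)⁻¹ * (G (k+1) x - G (k+1) (x - h k))) x) :
    ∀ k, ContDiff ℝ (⊤ : ℕ∞) (G k) := by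
  have key : ∀ n : ℕ, ∀ k, ContDiff ℝ n (G k) := by
    intro n
    induction n with
    | zero =>
      intro k
      exact contDiff_zero.2 (continuous_iff_continuousAt.2 fun x => (hd k x).continuousAt)
    | succ n ih =>
      intro k
      push_cast
      rw [contDiff_succ_iff_deriv]
      refine ⟨fun x => (hd k x).differentiableAt, by simp, ?_⟩
      have : deriv (G k) = fun x => (h k)⁻¹ * (G (k+1) x - G (k+1) (x - h k)) :=
        funext fun x => (hd k x).deriv
      rw [this]
      exact contDiff_const.mul ((ih (k+1)).sub ((ih (k+1)).comp (contDiff_id.sub contDiff_const)))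
  intro k
  exact contDiff_infty.2 fun n => key n k

noncomputable def pInt (p : ℝ) (u : ℝ → ℝ) : ENNReal := ∫⁻ x, ‖u x‖ₑ ^ p

lemma pInt_add_le {p : ℝ} (hp : 0 < p) (hp1 : p < 1) {u v : ℝ → ℝ} (hu : AEStronglyMeasurable u volume) :
    pInt p (fun x => u x + v x) ≤ pInt p u + pInt p v := by
  unfold pInt
  rw [← lintegral_add_left' (hu.enorm.pow_const p)]
  apply lintegral_mono
  intro x
  exact (ENNReal.rpow_le_rpow (enorm_add_le _ _) hp.le).trans
    (ENNReal.rpow_add_le_add_rpow _ _ hp.le hp1.le)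

lemma pInt_neg (p : ℝ) (u : ℝ → ℝ) : pInt p (fun x => - u x) = pInt p u := by
  simp [pInt]

lemma pInt_sub_le {p : ℝ} (hp : 0 < p) (hp1 : p < 1) {u v : ℝ → ℝ} (hu : AEStronglyMeasurable u volume) :
    pInt p (fun x => u x - v x) ≤ pInt p u + pInt p v := by
  have := pInt_add_le hp hp1 (v := fun x => - v x) hu
  rw [pInt_neg] at this
  simpa [sub_eq_add_neg] using this

lemma pInt_const_mul {p : ℝ} (hp : 0 < p) (c : ℝ) (u : ℝ → ℝ) :
    pInt p (fun x => c * u x) = ‖c‖ₑ ^ p * pInt p u := by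
  unfold pInt
  rw [← lintegral_const_mul' _ _ (ENNReal.rpow_ne_top_of_nonneg hp.le (by simp))]
  congr 1
  ext x
  rw [enorm_mul, ENNReal.mul_rpow_of_nonneg _ _ hp.le]

lemma pInt_shift (p : ℝ) (u : ℝ → ℝ) (a : ℝ) : pInt p (fun x => u (x - a)) = pInt p u :=
  lintegral_sub_right_eq_self (fun x => ‖u x‖ₑ ^ p) a

lemma pInt_le_supp {p : ℝ} (hp : 0 < p) {u : ℝ → ℝ} {a b C : ℝ}
    (h1 : ∀ x, |u x| ≤ C) (h2 : ∀ x, x ∉ Set.Icc a b → u x = 0) :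
    pInt p u ≤ ENNReal.ofReal C ^ p * ENNReal.ofReal (b - a) := by
  have : pInt p u ≤ ∫⁻ x, (Set.Icc a b).indicator (fun _ => ENNReal.ofReal C ^ p) x := by
    apply lintegral_mono
    intro x
    by_cases hx : x ∈ Set.Icc a b
    · simp only [Set.indicator_of_mem hx]
      apply ENNReal.rpow_le_rpow _ hp.le
      rw [Real.enorm_eq_ofReal_abs]
      exact ENNReal.ofReal_le_ofReal (h1 x)
    · simp [h2 x hx, hx, hp]
  refine this.trans ?_
  rw [lintegral_indicator_const measurableSet_Icc, Real.volume_Icc]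

noncomputable def hseq (p ε : ℝ) : ℕ → ℝ × ℝ
  | 0 => (min (ε / 2) ((ε / 2) ^ (1 / (1 - p))), ε)
  | k + 1 => (min ((hseq p ε k).1 / 2)
      (((hseq p ε k).2 * (hseq p ε k).1 ^ p / 2 / 2) ^ (1 / (1 - p))),
      (hseq p ε k).2 * (hseq p ε k).1 ^ p / 2)

lemma hseq_pos {p ε : ℝ} (hε : 0 < ε) (k : ℕ) : 0 < (hseq p ε k).1 ∧ 0 < (hseq p ε k).2 := by
  induction k with
  | zero => simp only [hseq]; constructor <;> positivity
  | succ k ih =>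
    obtain ⟨h1, h2⟩ := ih
    simp only [hseq]; constructor <;> positivity

lemma hseq_le {p ε : ℝ} (hp1 : p < 1) (hε : 0 < ε) (k : ℕ) :
    2 * (hseq p ε k).1 ^ (1 - p) ≤ (hseq p ε k).2 := by
  have key : ∀ a e : ℝ, 0 < a → 0 < e → a ≤ (e / 2) ^ (1 / (1 - p)) → 2 * a ^ (1 - p) ≤ e := by
    intro a e ha he h
    have := Real.rpow_le_rpow ha.le h (by linarith : 0 ≤ 1 - p)
    rw [← Real.rpow_mul (by positivity), one_div_mul_cancel (by linarith), Real.rpow_one] at this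
    linarith
  apply key _ _ (hseq_pos hε k).1 (hseq_pos hε k).2
  cases k with
  | zero => exact min_le_right _ _
  | succ k => exact min_le_right _ _

lemma exists_step {p : ℝ} (hp : 0 < p) (hp1 : p < 1) {ε : ℝ} (hε : 0 < ε) :
    ∃ ψ : ℝ → ℝ, ContDiff ℝ (⊤ : ℕ∞) ψ ∧ (∀ x, 0 ≤ ψ x ∧ ψ x ≤ 1) ∧ (∀ x, x < 0 → ψ x = 0) ∧
      (∀ x, ε ≤ x → ψ x = 1) ∧ ∀ n, pInt p (iteratedDeriv (n+1) ψ) ≤ ENNReal.ofReal ε := by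
  let h : ℕ → ℝ := fun k => (hseq p ε k).1
  let e : ℕ → ℝ := fun k => (hseq p ε k).2
  have hpos : ∀ k, 0 < h k := fun k => (hseq_pos hε k).1
  have epos : ∀ k, 0 < e k := fun k => (hseq_pos hε k).2
  have hhalf : ∀ k, h (k+1) ≤ h k / 2 := fun k => min_le_left _ _
  have hle : ∀ k, 2 * h k ^ (1 - p) ≤ e k := hseq_le hp1 hε
  have hee : ∀ k, e (k+1) = e k * h k ^ p / 2 := fun k => rfl
  obtain ⟨G, hmono, hb, h0, h1, hG⟩ := exists_family h hpos hhalf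
  have hd := family_deriv h hpos G hmono hG
  have hs := family_contDiff h G hd
  have hder : ∀ k, deriv (G k) = fun x => (h k)⁻¹ * (G (k+1) x - G (k+1) (x - h k)) := fun k =>
    funext fun x => (hd k x).deriv
  have hCD : ∀ (k n : ℕ) x, ContDiffAt ℝ n (G k) x := fun k n x =>
    ((hs k).of_le (by exact_mod_cast le_top)).contDiffAt
  have hiter : ∀ k n, iteratedDeriv (n+1) (G k) = fun x => (h k)⁻¹ *
      (iteratedDeriv n (G (k+1)) x - iteratedDeriv n (G (k+1)) (x - h k)) := by
    intro k n
    have hsub : ∀ x, ContDiffAt ℝ n (fun z => G (k+1) (z - h k)) x := fun x =>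
      (((hs (k+1)).of_le (by exact_mod_cast le_top)).comp (contDiff_id.sub contDiff_const)).contDiffAt
    rw [iteratedDeriv_succ', hder]
    ext x
    rw [iteratedDeriv_const_mul _ ((hCD _ _ _).sub (hsub x)), iteratedDeriv_fun_sub (hCD _ _ _) (hsub x),
      iteratedDeriv_comp_sub_const]
  have main : ∀ n k, pInt p (iteratedDeriv (n+1) (G k)) ≤ ENNReal.ofReal (e k) := by
    intro n
    induction n with
    | zero =>
      intro k
      rw [hiter]
      have := pInt_le_supp hp (u := fun x => (h k)⁻¹ * (iteratedDeriv 0 (G (k+1)) x - iteratedDeriv 0 (G (k+1)) (x - h k)))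
        (a := 0) (b := 2 * h k) (C := (h k)⁻¹) ?_ ?_
      · refine this.trans ?_
        rw [ENNReal.ofReal_rpow_of_pos (inv_pos.2 (hpos k)), ← ENNReal.ofReal_mul (by have := hpos k; positivity)]
        apply ENNReal.ofReal_le_ofReal
        refine le_trans (le_of_eq ?_) (hle k)
        rw [Real.rpow_sub (hpos k), Real.rpow_one, Real.inv_rpow (hpos k).le]
        field_simp
        ring
      · intro x
        simp only [iteratedDeriv_zero]
        rw [abs_mul, abs_of_pos (inv_pos.2 (hpos k))]
        apply mul_le_of_le_one_right (inv_pos.2 (hpos k)).le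
        have a1 := hb (k+1) x
        have a2 := hb (k+1) (x - h k)
        rw [abs_le]; constructor <;> linarith
      · intro x hx
        simp only [iteratedDeriv_zero]
        rw [Set.mem_Icc, not_and_or, not_le, not_le] at hx
        have := hpos k
        have := hhalf k
        rcases hx with hx | hx
        · rw [h0 _ x hx, h0 _ (x - h k) (by linarith)]; simp
        · rw [h1 _ x (by linarith), h1 _ (x - h k) (by linarith)]; simp
    | succ n ih =>
      intro k
      rw [hiter, pInt_const_mul hp]
      have hm : Continuous (iteratedDeriv (n+1) (G (k+1))) :=
        (hs (k+1)).continuous_iteratedDeriv (n+1) (by exact_mod_cast le_top)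
      have a1 := pInt_sub_le hp hp1 (u := iteratedDeriv (n+1) (G (k+1)))
        (v := fun x => iteratedDeriv (n+1) (G (k+1)) (x - h k)) hm.aestronglyMeasurable
      rw [pInt_shift] at a1
      have a2 := a1.trans (add_le_add (ih (k+1)) (ih (k+1)))
      refine (mul_le_mul_right a2 _).trans ?_
      rw [Real.enorm_eq_ofReal (inv_pos.2 (hpos k)).le, ENNReal.ofReal_rpow_of_pos (inv_pos.2 (hpos k)),
        ← ENNReal.ofReal_add (epos _).le (epos _).le, ← ENNReal.ofReal_mul (by have := hpos k; positivity)]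
      apply ENNReal.ofReal_le_ofReal
      rw [hee, Real.inv_rpow (hpos k).le]
      have := Real.rpow_pos_of_pos (hpos k) p
      field_simp
      linarith
  have hh0 : 2 * h 0 ≤ ε := by
    have : h 0 ≤ ε / 2 := min_le_left _ _
    linarith
  exact ⟨G 0, hs 0, hb 0, h0 0, fun x hx => h1 0 x (hh0.trans hx), fun n => main n 0⟩

def Good (p : ℝ) (f : ℝ → ℝ) : Prop :=
  AEStronglyMeasurable f volume ∧ ∀ ε : ℝ, 0 < ε → ∃ u : ℝ → ℝ, ContDiff ℝ (⊤ : ℕ∞) u ∧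
    pInt p (fun x => f x - u x) ≤ ENNReal.ofReal ε ∧
    ∀ n, pInt p (iteratedDeriv (n+1) u) ≤ ENNReal.ofReal ε

lemma contAt {u : ℝ → ℝ} (hu : ContDiff ℝ (⊤ : ℕ∞) u) (n : ℕ) (x : ℝ) : ContDiffAt ℝ n u x :=
  (hu.of_le (by exact_mod_cast le_top)).contDiffAt

lemma aesm {u : ℝ → ℝ} (hu : ContDiff ℝ (⊤ : ℕ∞) u) (n : ℕ) :
    AEStronglyMeasurable (iteratedDeriv n u) volume :=
  (hu.continuous_iteratedDeriv n (by exact_mod_cast le_top)).aestronglyMeasurable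

lemma aesm0 {u : ℝ → ℝ} (hu : ContDiff ℝ (⊤ : ℕ∞) u) : AEStronglyMeasurable u volume :=
  hu.continuous.aestronglyMeasurable

lemma ofReal_half {ε : ℝ} (hε : 0 < ε) :
    ENNReal.ofReal (ε / 2) + ENNReal.ofReal (ε / 2) = ENNReal.ofReal ε := by
  rw [← ENNReal.ofReal_add (by positivity) (by positivity)]; ring_nf

lemma Good.add {p : ℝ} (hp : 0 < p) (hp1 : p < 1) {f g : ℝ → ℝ} (hf : Good p f) (hg : Good p g) :
    Good p (fun x => f x + g x) := by
  refine ⟨hf.1.add hg.1, fun ε hε => ?_⟩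
  obtain ⟨u, hu, hu1, hu2⟩ := hf.2 (ε / 2) (by positivity)
  obtain ⟨v, hv, hv1, hv2⟩ := hg.2 (ε / 2) (by positivity)
  refine ⟨fun x => u x + v x, hu.add hv, ?_, ?_⟩
  · have := pInt_add_le hp hp1 (u := fun x => f x - u x) (v := fun x => g x - v x)
      (hf.1.sub (aesm0 hu))
    rw [← ofReal_half hε]
    refine le_trans (le_of_eq ?_) (this.trans (add_le_add hu1 hv1))
    congr 1; ext x; ring
  · intro n
    rw [← ofReal_half hε]
    have e : iteratedDeriv (n+1) (fun x => u x + v x) =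
        fun x => iteratedDeriv (n+1) u x + iteratedDeriv (n+1) v x := by
      ext x
      exact iteratedDeriv_fun_add (contAt hu _ x) (contAt hv _ x)
    rw [e]
    exact (pInt_add_le hp hp1 (aesm hu _)).trans (add_le_add (hu2 n) (hv2 n))

lemma Good.const_mul {p : ℝ} (hp : 0 < p) {f : ℝ → ℝ} (c : ℝ) (hf : Good p f) :
    Good p (fun x => c * f x) := by
  refine ⟨hf.1.const_mul c, fun ε hε => ?_⟩
  have hc : 0 < |c| ^ p + 1 := by positivity
  obtain ⟨u, hu, hu1, hu2⟩ := hf.2 (ε / (|c| ^ p + 1)) (by positivity)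
  have key : ∀ X : ENNReal, X ≤ ENNReal.ofReal (ε / (|c| ^ p + 1)) → ‖c‖ₑ ^ p * X ≤ ENNReal.ofReal ε := by
    intro X hX
    refine (mul_le_mul_right hX _).trans ?_
    rw [Real.enorm_eq_ofReal_abs, ENNReal.ofReal_rpow_of_nonneg (abs_nonneg c) hp.le,
      ← ENNReal.ofReal_mul (by positivity)]
    apply ENNReal.ofReal_le_ofReal
    rw [mul_div_assoc', div_le_iff₀ hc]
    nlinarith
  refine ⟨fun x => c * u x, contDiff_const.mul hu, ?_, ?_⟩
  · have : (fun x => c * f x - c * u x) = fun x => c * (f x - u x) := by ext x; ring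
    rw [this, pInt_const_mul hp]
    exact key _ hu1
  · intro n
    have e : iteratedDeriv (n+1) (fun x => c * u x) = fun x => c * iteratedDeriv (n+1) u x := by
      ext x
      exact iteratedDeriv_const_mul c (contAt hu _ x)
    rw [e, pInt_const_mul hp]
    exact key _ (hu2 n)

lemma Good.zero {p : ℝ} (hp : 0 < p) : Good p (fun _ => 0) := by
  refine ⟨aestronglyMeasurable_const, fun ε hε => ⟨fun _ => 0, contDiff_const, ?_, ?_⟩⟩
  · simp [pInt, hp]
  · intro n
    have : iteratedDeriv (n+1) (fun _ : ℝ => (0:ℝ)) = fun _ => 0 := by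
      ext x; simp
    rw [this]
    simp [pInt, hp]

lemma Good.sum {p : ℝ} (hp : 0 < p) (hp1 : p < 1) {ι : Type*} (s : Finset ι) (f : ι → ℝ → ℝ)
    (hf : ∀ i, Good p (f i)) : Good p (fun x => ∑ i ∈ s, f i x) := by
  classical
  induction s using Finset.induction_on with
  | empty => simpa using Good.zero hp
  | insert a s ha ih =>
    simp only [Finset.sum_insert ha]
    exact (hf a).add hp hp1 ih

lemma Good.lim {p : ℝ} (hp : 0 < p) (hp1 : p < 1) {f : ℝ → ℝ} (hf : AEStronglyMeasurable f volume)
    (h : ∀ ε : ℝ, 0 < ε → ∃ g, Good p g ∧ pInt p (fun x => f x - g x) ≤ ENNReal.ofReal ε) :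
    Good p f := by
  refine ⟨hf, fun ε hε => ?_⟩
  obtain ⟨g, hg, hfg⟩ := h (ε / 2) (by positivity)
  obtain ⟨u, hu, hu1, hu2⟩ := hg.2 (ε / 2) (by positivity)
  refine ⟨u, hu, ?_, fun n => (hu2 n).trans (ENNReal.ofReal_le_ofReal (by linarith))⟩
  have := pInt_add_le hp hp1 (u := fun x => f x - g x) (v := fun x => g x - u x) (hf.sub hg.1)
  rw [← ofReal_half hε]
  refine le_trans (le_of_eq ?_) (this.trans (add_le_add hfg hu1))
  congr 1; ext x; ring

lemma good_interval {p : ℝ} (hp : 0 < p) (hp1 : p < 1) (a b : ℝ) :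
    Good p (fun x => (if a ≤ x then 1 else 0) - (if b ≤ x then 1 else 0)) := by
  have hH : ∀ a : ℝ, Measurable (fun x : ℝ => if a ≤ x then (1:ℝ) else 0) := fun a =>
    Measurable.ite measurableSet_Ici measurable_const measurable_const
  refine ⟨((hH a).sub (hH b)).aestronglyMeasurable, fun ε hε => ?_⟩
  obtain ⟨ψ, hs, hb, h0, h1, hd⟩ := exists_step hp hp1 (half_pos hε)
  have hsh : ∀ a : ℝ, ContDiff ℝ (⊤ : ℕ∞) (fun x => ψ (x - a)) := fun a =>
    hs.comp (contDiff_id.sub contDiff_const)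
  have herr : ∀ a : ℝ, pInt p (fun x => (if a ≤ x then 1 else 0) - ψ (x - a)) ≤ ENNReal.ofReal (ε / 2) := by
    intro a
    have := pInt_le_supp hp (u := fun x => (if a ≤ x then 1 else 0) - ψ (x - a)) (a := a) (b := a + ε / 2)
      (C := 1) ?_ ?_
    · simpa using this
    · intro x
      have := hb (x - a)
      rw [abs_le]
      split_ifs <;> constructor <;> linarith
    · intro x hx
      rw [Set.mem_Icc, not_and_or, not_le, not_le] at hx
      rcases hx with hx | hx
      · rw [if_neg (by linarith), h0 _ (by linarith)]; simp
      · rw [if_pos (by linarith), h1 _ (by linarith)]; simp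
  refine ⟨fun x => ψ (x - a) - ψ (x - b), (hsh a).sub (hsh b), ?_, ?_⟩
  · have := pInt_sub_le hp hp1 (u := fun x => (if a ≤ x then 1 else 0) - ψ (x - a))
      (v := fun x => (if b ≤ x then 1 else 0) - ψ (x - b))
      ((hH a).aestronglyMeasurable.sub (aesm0 (hsh a)))
    rw [← ofReal_half hε]
    refine le_trans (le_of_eq ?_) (this.trans (add_le_add (herr a) (herr b)))
    congr 1; ext x; ring
  · intro n
    have e : iteratedDeriv (n+1) (fun x => ψ (x - a) - ψ (x - b)) =
        fun x => iteratedDeriv (n+1) ψ (x - a) - iteratedDeriv (n+1) ψ (x - b) := by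
      ext x
      rw [iteratedDeriv_fun_sub (contAt (hsh a) _ x) (contAt (hsh b) _ x),
        iteratedDeriv_comp_sub_const, iteratedDeriv_comp_sub_const]
    rw [e, ← ofReal_half hε]
    have hm : AEStronglyMeasurable (fun x => iteratedDeriv (n+1) ψ (x - a)) volume :=
      ((hs.continuous_iteratedDeriv (n+1) (by exact_mod_cast le_top)).comp
        (continuous_id.sub continuous_const)).aestronglyMeasurable
    refine (pInt_sub_le hp hp1 hm).trans ?_
    rw [pInt_shift, pInt_shift]
    exact add_le_add (hd n) (hd n)

lemma good_cont {p : ℝ} (hp : 0 < p) (hp1 : p < 1) {g : ℝ → ℝ} (hg : Continuous g)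
    (hc : HasCompactSupport g) : Good p g := by
  refine Good.lim hp hp1 hg.aestronglyMeasurable fun ε hε => ?_
  obtain ⟨R, hR0, hR⟩ : ∃ R : ℝ, 0 < R ∧ ∀ x, R < |x| → g x = 0 := by
    obtain ⟨R, hR⟩ := hc.isCompact.isBounded.subset_closedBall 0
    refine ⟨max R 1, by positivity, fun x hx => ?_⟩
    by_contra hne
    have h1 := hR (subset_tsupport g hne)
    rw [mem_closedBall_zero_iff, Real.norm_eq_abs] at h1
    exact absurd (h1.trans (le_max_left R 1)) (not_le.2 hx)
  have huc := hc.uniformContinuous_of_continuous hg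
  set δ : ℝ := (ε / (2 * (R + 1))) ^ (1 / p) with hδ
  have hδ0 : 0 < δ := by positivity
  obtain ⟨η, hη, hηδ⟩ := Metric.uniformContinuous_iff.1 huc δ hδ0
  obtain ⟨m, hm⟩ := exists_nat_gt (max 1 (1 / η))
  have hm1 : (1:ℝ) < m := (le_max_left _ _).trans_lt hm
  have hm0 : (0:ℝ) < m := by linarith
  have hmη : 1 / (m:ℝ) < η := by
    have := (le_max_right 1 (1/η)).trans_lt hm
    rw [div_lt_iff₀ hη] at this
    rw [div_lt_iff₀ hm0]; linarith
  let K : ℤ := ⌈m * R⌉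
  have hgz : ∀ j : ℤ, j ∉ Finset.Icc (-K) K → g (j / m) = 0 := by
    intro j hj
    apply hR
    rw [abs_div, abs_of_pos hm0, lt_div_iff₀ hm0]
    rw [Finset.mem_Icc, ← abs_le, not_le] at hj
    have h1 : m * R ≤ K := Int.le_ceil _
    have h2 : (K : ℝ) < |(j:ℝ)| := by exact_mod_cast hj
    linarith
  let s : ℝ → ℝ := fun x => g (⌊m * x⌋ / m)
  have hs : Good p s := by
    have e : s = fun x => ∑ j ∈ Finset.Icc (-K) K, g (j / m) *
        ((if (j:ℝ) / m ≤ x then 1 else 0) - (if ((j:ℝ) + 1) / m ≤ x then 1 else 0)) := by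
      ext x
      have e1 : ∀ j : ℤ, ((if (j:ℝ) / m ≤ x then (1:ℝ) else 0) - (if ((j:ℝ) + 1) / m ≤ x then 1 else 0))
          = if ⌊m * x⌋ = j then 1 else 0 := by
        intro j
        simp only [div_le_iff₀ hm0, Int.floor_eq_iff]
        have : x * m = m * x := mul_comm _ _
        split_ifs <;> grind
      simp only [e1, mul_ite, mul_one, mul_zero, Finset.sum_ite_eq]
      split_ifs with hmem
      · rfl
      · exact hgz _ hmem
    rw [e]
    exact Good.sum hp hp1 _ _ fun j => (good_interval hp hp1 _ _).const_mul hp _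
  refine ⟨s, hs, ?_⟩
  have hclose : ∀ x : ℝ, |x - ⌊m * x⌋ / m| < 1 / (m:ℝ) := by
    intro x
    have h1 := Int.floor_le (m * x)
    have h2 := Int.lt_floor_add_one (m * x)
    have : x - ⌊m * x⌋ / m = (m * x - ⌊m * x⌋) / m := by field_simp
    rw [this, abs_div, abs_of_pos hm0, abs_of_nonneg (by linarith)]
    gcongr
    linarith
  have := pInt_le_supp hp (u := fun x => g x - s x) (a := -(R+1)) (b := R+1) (C := δ) ?_ ?_
  · refine this.trans ?_
    rw [ENNReal.ofReal_rpow_of_pos hδ0, ← ENNReal.ofReal_mul (by positivity)]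
    apply ENNReal.ofReal_le_ofReal
    rw [hδ, ← Real.rpow_mul (by positivity), one_div_mul_cancel hp.ne', Real.rpow_one]
    apply le_of_eq
    field_simp
    ring
  · intro x
    have := hηδ (a := x) (b := ⌊m * x⌋ / m) ((hclose x).trans hmη)
    exact this.le
  · intro x hx
    rw [Set.mem_Icc, ← abs_le, not_le] at hx
    have h1 : 1 / (m:ℝ) < 1 := by rw [div_lt_one hm0]; exact hm1
    have h2 := hclose x
    have h3 : |x| ≤ |x - ⌊m * x⌋ / m| + |(⌊m * x⌋ / m : ℝ)| := by
      simpa using abs_add_le (x - ⌊m * x⌋ / m) (⌊m * x⌋ / m)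
    change g x - g (⌊m * x⌋ / m) = 0
    rw [hR x (by linarith), hR (⌊m * x⌋ / m) (by linarith), sub_zero]

lemma pInt_eq {p : ℝ} (hp : 0 < p) (u : ℝ → ℝ) : pInt p u = eLpNorm u (ENNReal.ofReal p) volume ^ p := by
  rw [eLpNorm_eq_lintegral_rpow_enorm_toReal (by simpa using hp) (by simp), ENNReal.toReal_ofReal hp.le,
    ← ENNReal.rpow_mul, one_div_mul_cancel hp.ne', ENNReal.rpow_one]
  rfl

lemma enorm_abs_rpow {p : ℝ} (hp : 0 < p) (y : ℝ) : ENNReal.ofReal (|y| ^ p) = ‖y‖ₑ ^ p := by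
  rw [Real.enorm_eq_ofReal_abs, ENNReal.ofReal_rpow_of_nonneg (abs_nonneg _) hp.le]

lemma aesm_abs {p : ℝ} {u : ℝ → ℝ} (hu : AEStronglyMeasurable u volume) :
    AEStronglyMeasurable (fun x => |u x| ^ p) volume :=
  (hu.norm.aemeasurable.pow_const p).aestronglyMeasurable

lemma memLp'_iff {p : ℝ} (hp : 0 < p) {u : ℝ → ℝ} (hu : AEStronglyMeasurable u volume) :
    MemLp' p u ↔ pInt p u ≠ ⊤ := by
  unfold MemLp' Integrable
  rw [hasFiniteIntegral_iff_ofReal (Eventually.of_forall fun x => by positivity)]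
  simp only [enorm_abs_rpow hp, aesm_abs hu, true_and]
  exact lt_top_iff_ne_top

lemma pNorm_eq {p : ℝ} (hp : 0 < p) {u : ℝ → ℝ} (hu : AEStronglyMeasurable u volume) :
    pNorm p u = (pInt p u).toReal ^ (1 / p) := by
  unfold pNorm
  rw [integral_eq_lintegral_of_nonneg_ae (Eventually.of_forall fun x => by positivity) (aesm_abs hu)]
  simp only [enorm_abs_rpow hp]
  rfl

lemma good_Lp {p : ℝ} (hp : 0 < p) (hp1 : p < 1) {f : ℝ → ℝ} (hf : AEStronglyMeasurable f volume)
    (hfin : pInt p f ≠ ⊤) : Good p f := by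
  refine Good.lim hp hp1 hf fun ε hε => ?_
  have hmem : MemLp f (ENNReal.ofReal p) volume := by
    refine ⟨hf, ?_⟩
    rw [pInt_eq hp] at hfin
    rw [lt_top_iff_ne_top]
    intro h
    rw [h, ENNReal.top_rpow_of_pos hp] at hfin
    exact hfin rfl
  obtain ⟨g, hc, hle, hg, -⟩ := hmem.exists_hasCompactSupport_eLpNorm_sub_le (by simp)
    (ε := ENNReal.ofReal (ε ^ (1 / p))) (by simp; positivity)
  refine ⟨g, good_cont hp hp1 hg hc, ?_⟩
  rw [pInt_eq hp]
  refine (ENNReal.rpow_le_rpow hle hp.le).trans (le_of_eq ?_)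
  rw [ENNReal.ofReal_rpow_of_pos (by positivity), ← Real.rpow_mul hε.le, one_div_mul_cancel hp.ne', Real.rpow_one]

end LpEmb

/-- Theorem: `L^p` embeds into `Ĉ`. Every `f ∈ L^p(ℝ)` is the `L^p`-limit of
a `‖·‖_M`-Cauchy sequence of smooth functions whose derivatives all tend to `0` in the weighted
norms, and whose `‖·‖_M`-norms tend to `‖f‖_p / M_0`. -/
theorem Lp_embeds_into_completion (p : ℝ) (hp : 0 < p) (hp1 : p < 1)
    (M : ℕ → ℝ) (hM : ∀ k, 1 ≤ M k)
    (f : ℝ → ℝ) (hmeas : AEStronglyMeasurable f (volume : Measure ℝ)) (hfLp : MemLp' p f) :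
    ∃ F : ℕ → ℝ → ℝ,
      (∀ i, ContDiff ℝ (⊤ : ℕ∞) (F i) ∧ (∀ n, MemLp' p (iteratedDeriv n (F i))) ∧
        BddAbove (Set.range fun k : ℕ => pNorm p (iteratedDeriv k (F i)) / M k)) ∧
      Filter.Tendsto (fun i => pNorm p (fun x => f x - F i x)) Filter.atTop (nhds 0) ∧
      Filter.Tendsto (fun i => ⨆ n : ℕ, pNorm p (iteratedDeriv (n + 1) (F i)) / M (n + 1))
        Filter.atTop (nhds 0) ∧
      (∀ ε > 0, ∃ N, ∀ i ≥ N, ∀ j ≥ N, MNorm p M (fun x => F i x - F j x) < ε) ∧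
      Filter.Tendsto (fun i => MNorm p M (F i)) Filter.atTop (nhds (pNorm p f / M 0)) := by
  have hfin := (LpEmb.memLp'_iff hp hmeas).1 hfLp
  have hgood := LpEmb.good_Lp hp hp1 hmeas hfin
  have hd0 : ∀ i : ℕ, (0:ℝ) < 1 / ((i:ℝ) + 1) := fun i => by positivity
  choose F hFs hF0 hFn using fun i : ℕ => hgood.2 (1 / ((i:ℝ) + 1)) (hd0 i)
  have hMpos : ∀ k, 0 < M k := fun k => lt_of_lt_of_le one_pos (hM k)
  have hsm : ∀ i, AEStronglyMeasurable (fun x => f x - F i x) volume := fun i =>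
    hmeas.sub (LpEmb.aesm0 (hFs i))
  have hFfin : ∀ i, LpEmb.pInt p (F i) ≠ ⊤ := by
    intro i
    have h1 := LpEmb.pInt_sub_le hp hp1 (v := fun x => f x - F i x) hmeas
    simp only [sub_sub_cancel] at h1
    exact ne_top_of_le_ne_top (ENNReal.add_ne_top.2
      ⟨hfin, ne_top_of_le_ne_top ENNReal.ofReal_ne_top (hF0 i)⟩) h1
  -- general bound
  have bound : ∀ (u : ℝ → ℝ) (e : ℝ), AEStronglyMeasurable u volume → 0 ≤ e →
      LpEmb.pInt p u ≤ ENNReal.ofReal e → pNorm p u ≤ e ^ (1 / p) := by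
    intro u e hu he hle
    rw [LpEmb.pNorm_eq hp hu]
    exact Real.rpow_le_rpow ENNReal.toReal_nonneg (ENNReal.toReal_le_of_le_ofReal he hle) (by positivity)
  have pnn : ∀ u : ℝ → ℝ, 0 ≤ pNorm p u := fun u => by
    unfold pNorm
    exact Real.rpow_nonneg (integral_nonneg fun x => by positivity) _
  have divle : ∀ (u : ℝ → ℝ) (k : ℕ), pNorm p u / M k ≤ pNorm p u := fun u k =>
    div_le_self (pnn u) (hM k)
  have hn : ∀ i n, pNorm p (iteratedDeriv (n+1) (F i)) / M (n+1) ≤ (1 / ((i:ℝ) + 1)) ^ (1 / p) :=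
    fun i n => (divle _ _).trans (bound _ _ (LpEmb.aesm (hFs i) _) (hd0 i).le (hFn i n))
  have htend : Tendsto (fun i : ℕ => (1 / ((i:ℝ) + 1)) ^ (1 / p)) atTop (nhds 0) := by
    have := tendsto_one_div_add_atTop_nhds_zero_nat (𝕜 := ℝ).rpow_const (p := 1 / p)
      (Or.inr (by positivity))
    rwa [Real.zero_rpow (by positivity)] at this
  have hall : ∀ i k, pNorm p (iteratedDeriv k (F i)) / M k ≤
      max (pNorm p (F i) / M 0) ((1 / ((i:ℝ) + 1)) ^ (1 / p)) := by
    intro i k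
    cases k with
    | zero => rw [iteratedDeriv_zero]; exact le_max_left _ _
    | succ n => exact (hn i n).trans (le_max_right _ _)
  have hbdd : ∀ i, BddAbove (Set.range fun k : ℕ => pNorm p (iteratedDeriv k (F i)) / M k) := by
    intro i
    refine ⟨max (pNorm p (F i) / M 0) ((1 / ((i:ℝ) + 1)) ^ (1 / p)), ?_⟩
    rintro _ ⟨k, rfl⟩
    exact hall i k
  have hlim0 : Tendsto (fun i => pNorm p (fun x => f x - F i x)) atTop (nhds 0) :=
    squeeze_zero (fun i => pnn _) (fun i => bound _ _ (hsm i) (hd0 i).le (hF0 i)) htend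
  have hlimF : Tendsto (fun i => pNorm p (F i)) atTop (nhds (pNorm p f)) := by
    have hJ : Tendsto (fun i => (LpEmb.pInt p (F i)).toReal) atTop (nhds (LpEmb.pInt p f).toReal) := by
      rw [tendsto_iff_dist_tendsto_zero]
      refine squeeze_zero (fun i => dist_nonneg) (fun i => ?_)
        (tendsto_one_div_add_atTop_nhds_zero_nat (𝕜 := ℝ))
      have hdfin := ne_top_of_le_ne_top ENNReal.ofReal_ne_top (hF0 i)
      have hd := ENNReal.toReal_le_of_le_ofReal (hd0 i).le (hF0 i)
      have h1 := LpEmb.pInt_sub_le hp hp1 (v := fun x => f x - F i x) hmeas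
      simp only [sub_sub_cancel] at h1
      have h2 := LpEmb.pInt_add_le hp hp1 (v := F i) (hsm i)
      simp only [sub_add_cancel] at h2
      have h1' := ENNReal.toReal_mono (ENNReal.add_ne_top.2 ⟨hfin, hdfin⟩) h1
      have h2' := ENNReal.toReal_mono (ENNReal.add_ne_top.2 ⟨hdfin, hFfin i⟩) h2
      rw [ENNReal.toReal_add hfin hdfin] at h1'
      rw [ENNReal.toReal_add hdfin (hFfin i)] at h2'
      rw [Real.dist_eq, abs_le]
      constructor <;> linarith
    have h3 := hJ.rpow_const (p := 1 / p) (Or.inr (by positivity))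
    rw [LpEmb.pNorm_eq hp hmeas]
    refine h3.congr fun i => ?_
    rw [LpEmb.pNorm_eq hp (LpEmb.aesm0 (hFs i))]
  refine ⟨F, fun i => ⟨hFs i, ?_, hbdd i⟩, hlim0, ?_, ?_, ?_⟩
  · intro n
    rw [LpEmb.memLp'_iff hp (LpEmb.aesm (hFs i) n)]
    cases n with
    | zero => rw [iteratedDeriv_zero]; exact hFfin i
    | succ n => exact ne_top_of_le_ne_top ENNReal.ofReal_ne_top (hFn i n)
  · exact squeeze_zero (fun i => Real.iSup_nonneg fun n => div_nonneg (pnn _) (hMpos _).le)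
      (fun i => ciSup_le (hn i)) htend
  · intro ε hε
    have ht2 : Tendsto (fun i : ℕ => (1 / ((i:ℝ) + 1) + 1 / ((i:ℝ) + 1)) ^ (1 / p)) atTop (nhds 0) := by
      have h0 := tendsto_one_div_add_atTop_nhds_zero_nat (𝕜 := ℝ)
      have := (h0.add h0).rpow_const (p := 1 / p) (Or.inr (by positivity))
      rwa [add_zero, Real.zero_rpow (by positivity)] at this
    obtain ⟨N, hN⟩ := (ht2.eventually_lt_const hε).exists
    refine ⟨N, fun i hi j hj => lt_of_le_of_lt ?_ hN⟩
    have hdi : ∀ i : ℕ, i ≥ N → ENNReal.ofReal (1 / ((i:ℝ) + 1)) ≤ ENNReal.ofReal (1 / ((N:ℝ) + 1)) := by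
      intro i hi
      apply ENNReal.ofReal_le_ofReal
      apply one_div_le_one_div_of_le (by positivity)
      have : (N:ℝ) ≤ i := by exact_mod_cast hi
      linarith
    refine ciSup_le fun k => (divle _ _).trans ?_
    refine bound _ _ (LpEmb.aesm ((hFs i).sub (hFs j)) k) (by positivity) ?_
    rw [ENNReal.ofReal_add (hd0 N).le (hd0 N).le]
    cases k with
    | zero =>
      rw [iteratedDeriv_zero]
      have h1 := LpEmb.pInt_sub_le hp hp1 (v := fun x => f x - F i x) (hsm j)
      refine le_trans (le_of_eq ?_) (h1.trans (add_le_add ((hF0 j).trans (hdi j hj)) ((hF0 i).trans (hdi i hi))))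
      congr 1; ext x; ring
    | succ n =>
      have e : iteratedDeriv (n+1) (fun x => F i x - F j x) =
          fun x => iteratedDeriv (n+1) (F i) x - iteratedDeriv (n+1) (F j) x := by
        ext x
        exact iteratedDeriv_fun_sub (LpEmb.contAt (hFs i) _ x) (LpEmb.contAt (hFs j) _ x)
      rw [e]
      exact (LpEmb.pInt_sub_le hp hp1 (LpEmb.aesm (hFs i) _)).trans
        (add_le_add ((hFn i n).trans (hdi i hi)) ((hFn j n).trans (hdi j hj)))
  · have hA : Tendsto (fun i => pNorm p (F i) / M 0) atTop (nhds (pNorm p f / M 0)) :=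
      hlimF.div_const _
    have hB := hA.max htend
    rw [max_eq_left (div_nonneg (pnn f) (hMpos 0).le)] at hB
    refine tendsto_of_tendsto_of_tendsto_of_le_of_le hA hB (fun i => ?_) (fun i => ciSup_le (hall i))
    have := le_ciSup (hbdd i) 0
    simp only [iteratedDeriv_zero] at this
    exact this
end

section
/- Let p ∈ (0,1) and let M = (M_k)_{k≥0} satisfy M_k ≥ 1 for all k. For any ε₁ > 0 and ε₂ > 0 there exists a nonzero smooth function v : ℝ → ℝ such that: (1) ‖v^{(k)}‖_p ≤ ε₁·M_{k+1} for every k ≥ 0; (2) the support of v is contained in [0, ε₂]; and (3) ∫_ℝ v(t) dt = 1. In particular v belongs to the class C = {f smooth : ‖f‖_M < ∞}. -/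
open Real MeasureTheory Filter Set

noncomputable def avgOp (a : ℝ) (f : ℝ → ℝ) (x : ℝ) : ℝ := ∫ t in (0:ℝ)..1, f (x - a * t)

noncomputable def heav (x : ℝ) : ℝ := if 0 ≤ x then 1 else 0

noncomputable def approxH (a : ℕ → ℝ) : ℕ → ℕ → ℝ → ℝ
  | 0, _ => heav
  | m + 1, k => avgOp (a k) (approxH a m (k + 1))

lemma heav_mono : Monotone heav := by
  intro x y h
  unfold heav
  split_ifs <;> linarith

lemma avg_ii {f : ℝ → ℝ} (hf : Monotone f) {a : ℝ} (ha : 0 < a) (x : ℝ) :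
    IntervalIntegrable (fun t => f (x - a * t)) volume 0 1 := by
  apply Antitone.intervalIntegrable
  intro s t h
  apply hf
  nlinarith

lemma avg_mono {f : ℝ → ℝ} (hf : Monotone f) {a : ℝ} (ha : 0 < a) : Monotone (avgOp a f) := by
  intro x y h
  unfold avgOp
  apply intervalIntegral.integral_mono_on (by norm_num) (avg_ii hf ha x) (avg_ii hf ha y)
  intro t _
  apply hf
  linarith

lemma avg_le {f g : ℝ → ℝ} (hf : Monotone f) (hg : Monotone g) (hfg : ∀ x, f x ≤ g x)
    {a : ℝ} (ha : 0 < a) (x : ℝ) : avgOp a f x ≤ avgOp a g x := by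
  unfold avgOp
  apply intervalIntegral.integral_mono_on (by norm_num) (avg_ii hf ha x) (avg_ii hg ha x)
  intro t _
  apply hfg

lemma avg_const_s12 {f : ℝ → ℝ} {a c : ℝ} (x : ℝ)
    (h : ∀ t ∈ Icc (0:ℝ) 1, f (x - a * t) = c) : avgOp a f x = c := by
  unfold avgOp
  have : ∫ t in (0:ℝ)..1, f (x - a * t) = ∫ t in (0:ℝ)..1, c := by
    apply intervalIntegral.integral_congr
    intro t ht
    rw [uIcc_of_le (by norm_num)] at ht
    exact h t ht
  rw [this]; simp

lemma avg_le_self {f : ℝ → ℝ} (hf : Monotone f) {a : ℝ} (ha : 0 < a) (x : ℝ) :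
    avgOp a f x ≤ f x := by
  have : f x = ∫ t in (0:ℝ)..1, f x := by simp
  rw [this]
  unfold avgOp
  apply intervalIntegral.integral_mono_on (by norm_num) (avg_ii hf ha x) (by simp)
  intro t ht
  apply hf
  nlinarith [ht.1]

lemma avg_eq {f : ℝ → ℝ} (hf : Monotone f) {a : ℝ} (ha : 0 < a) (x : ℝ) :
    avgOp a f x = ((∫ t in (0:ℝ)..x, f t) - ∫ t in (0:ℝ)..(x - a), f t) / a := by
  have hi : ∀ u v, IntervalIntegrable f volume u v := fun u v => hf.intervalIntegrable
  unfold avgOp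
  rw [intervalIntegral.integral_comp_sub_mul _ ha.ne', intervalIntegral.integral_interval_sub_left (hi _ _) (hi _ _)]
  simp [div_eq_inv_mul]

lemma avg_cont {f : ℝ → ℝ} (hf : Monotone f) {a : ℝ} (ha : 0 < a) : Continuous (avgOp a f) := by
  have hi : ∀ u v, IntervalIntegrable f volume u v := fun u v => hf.intervalIntegrable
  have h1 : Continuous fun x => ∫ t in (0:ℝ)..x, f t := intervalIntegral.continuous_primitive hi 0
  have : avgOp a f = fun x => ((∫ t in (0:ℝ)..x, f t) - ∫ t in (0:ℝ)..(x - a), f t) / a :=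
    funext (avg_eq hf ha)
  rw [this]
  have h2 : Continuous fun x => ∫ t in (0:ℝ)..(x - a), f t := h1.comp (continuous_id.sub continuous_const)
  exact (h1.sub h2).div_const a

lemma avg_deriv {f : ℝ → ℝ} (hf : Monotone f) (hc : Continuous f) {a : ℝ} (ha : 0 < a) (x : ℝ) :
    HasDerivAt (avgOp a f) ((f x - f (x - a)) / a) x := by
  have : avgOp a f = fun x => ((∫ t in (0:ℝ)..x, f t) - ∫ t in (0:ℝ)..(x - a), f t) / a :=
    funext (avg_eq hf ha)
  rw [this]
  have h1 : ∀ y, HasDerivAt (fun x => ∫ t in (0:ℝ)..x, f t) (f y) y := fun y =>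
    (hc.integral_hasStrictDerivAt 0 y).hasDerivAt
  exact ((h1 x).sub ((h1 (x - a)).comp_sub_const x a)).div_const a

section
variable {a : ℕ → ℝ}

lemma approxH_mono (ha : ∀ k, 0 < a k) (m : ℕ) : ∀ k, Monotone (approxH a m k) := by
  induction m with
  | zero => exact fun _ => heav_mono
  | succ m ih => exact fun k => avg_mono (ih _) (ha k)

lemma approxH_anti (ha : ∀ k, 0 < a k) (m : ℕ) :
    ∀ k x, approxH a (m + 1) k x ≤ approxH a m k x := by
  induction m with
  | zero => exact fun k x => avg_le_self heav_mono (ha k) x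
  | succ m ih =>
    exact fun k x => avg_le (approxH_mono ha _ _) (approxH_mono ha _ _) (ih _) (ha k) x

lemma approxH_zero (ha : ∀ k, 0 < a k) (m : ℕ) :
    ∀ k x, x < 0 → approxH a m k x = 0 := by
  induction m with
  | zero => intro k x hx; simp [approxH, heav, hx]
  | succ m ih =>
    intro k x hx
    apply avg_const_s12
    intro t ht
    apply ih
    nlinarith [ha k, ht.1]

lemma approxH_one (ha : ∀ k, 0 < a k) (ha2 : ∀ k, 2 * a (k + 1) ≤ a k) (m : ℕ) :
    ∀ k x, 2 * a k ≤ x → approxH a m k x = 1 := by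
  induction m with
  | zero =>
    intro k x hx
    have : 0 ≤ x := by linarith [ha k]
    simp [approxH, heav, this]
  | succ m ih =>
    intro k x hx
    apply avg_const_s12
    intro t ht
    apply ih
    nlinarith [ha k, ht.2, ha2 k]

lemma approxH_mem (ha : ∀ k, 0 < a k) (ha2 : ∀ k, 2 * a (k + 1) ≤ a k) (m k : ℕ) (x : ℝ) :
    0 ≤ approxH a m k x ∧ approxH a m k x ≤ 1 := by
  constructor
  · rw [← approxH_zero ha m k (min x (-1)) (by simp)]
    exact approxH_mono ha m k (min_le_left _ _)
  · rw [← approxH_one ha ha2 m k (max x (2 * a k)) (by simp)]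
    exact approxH_mono ha m k (le_max_left _ _)

lemma exists_H (ha : ∀ k, 0 < a k) (ha2 : ∀ k, 2 * a (k + 1) ≤ a k) :
    ∃ H : ℕ → ℝ → ℝ, (∀ k, Continuous (H k)) ∧ (∀ k x, 0 ≤ H k x ∧ H k x ≤ 1) ∧
      (∀ k x, x < 0 → H k x = 0) ∧ (∀ k x, 2 * a k ≤ x → H k x = 1) ∧
      (∀ k x, HasDerivAt (H k) ((H (k + 1) x - H (k + 1) (x - a k)) / a k) x) := by
  have hlim : ∀ k x, ∃ l, Tendsto (fun m => approxH a m k x) atTop (nhds l) := by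
    intro k x
    refine ⟨_, tendsto_atTop_ciInf (antitone_nat_of_succ_le fun m => approxH_anti ha m k x) ⟨0, ?_⟩⟩
    rintro _ ⟨m, rfl⟩
    exact (approxH_mem ha ha2 m k x).1
  choose H hH using hlim
  have hmono : ∀ k, Monotone (H k) := fun k x y h =>
    le_of_tendsto_of_tendsto' (hH k x) (hH k y) fun m => approxH_mono ha m k h
  have havg : ∀ k, H k = avgOp (a k) (H (k + 1)) := by
    intro k
    funext x
    refine tendsto_nhds_unique ((tendsto_add_atTop_iff_nat 1).2 (hH k x)) ?_
    show Tendsto (fun m => avgOp (a k) (approxH a m (k + 1)) x) atTop _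
    unfold avgOp
    apply intervalIntegral.tendsto_integral_filter_of_dominated_convergence (fun _ => (1:ℝ))
    · refine Eventually.of_forall fun m => ?_
      exact ((approxH_mono ha m (k + 1)).measurable.comp (by fun_prop)).aestronglyMeasurable
    · refine Eventually.of_forall fun m => Eventually.of_forall fun t _ => ?_
      have := approxH_mem ha ha2 m (k + 1) (x - a k * t)
      rw [Real.norm_eq_abs, abs_of_nonneg this.1]
      exact this.2
    · simp
    · exact Eventually.of_forall fun t _ => hH _ _
  have hcont : ∀ k, Continuous (H k) := by
    intro k
    rw [havg k]
    exact avg_cont (hmono _) (ha k)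
  refine ⟨H, hcont, ?_, ?_, ?_, ?_⟩
  · exact fun k x => ⟨ge_of_tendsto' (hH k x) fun m => (approxH_mem ha ha2 m k x).1,
      le_of_tendsto' (hH k x) fun m => (approxH_mem ha ha2 m k x).2⟩
  · intro k x hx
    refine tendsto_nhds_unique (hH k x) ?_
    simp [approxH_zero ha _ k x hx]
  · intro k x hx
    refine tendsto_nhds_unique (hH k x) ?_
    simp [approxH_one ha ha2 _ k x hx]
  · intro k x
    have := avg_deriv (hmono (k + 1)) (hcont (k + 1)) (ha k) x
    rwa [← havg k] at this

lemma exists_v (ha : ∀ k, 0 < a k) (ha2 : ∀ k, 2 * a (k + 1) ≤ a k) :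
    ∃ v : ℕ → ℝ → ℝ, (∀ k, Continuous (v k)) ∧ (∀ k x, |v k x| ≤ 1 / a k) ∧
      (∀ k x, x ∉ Icc 0 (2 * a k) → v k x = 0) ∧ (∀ k, ∫ x, v k x = 1) ∧
      (∀ k x, HasDerivAt (v k) ((v (k + 1) x - v (k + 1) (x - a k)) / a k) x) := by
  obtain ⟨H, hc, hm, h0, h1, hd⟩ := exists_H ha ha2
  have hcv : ∀ k, Continuous fun x => (H (k + 1) x - H (k + 1) (x - a k)) / a k := fun k =>
    ((hc _).sub ((hc _).comp (continuous_id.sub continuous_const))).div_const _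
  have hsupp : ∀ k x, x ∉ Icc 0 (2 * a k) → (H (k + 1) x - H (k + 1) (x - a k)) / a k = 0 := by
    intro k x hx
    have hak := ha k
    have hak2 := ha2 k
    by_cases h : x < 0
    · rw [h0 _ _ h, h0 _ (x - a k) (by linarith)]; simp
    · have : 2 * a k < x := by
        by_contra h'
        exact hx ⟨not_lt.1 h, not_lt.1 h'⟩
      rw [h1 _ x (by linarith), h1 _ (x - a k) (by linarith)]; simp
  refine ⟨fun k x => (H (k + 1) x - H (k + 1) (x - a k)) / a k, hcv, ?_, hsupp, ?_, ?_⟩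
  · intro k x
    rw [abs_div, abs_of_pos (ha k)]
    apply div_le_div_of_nonneg_right _ (ha k).le
    rw [abs_le]
    have := hm (k + 1) x
    have := hm (k + 1) (x - a k)
    constructor <;> linarith
  · intro k
    have hak := ha k
    rw [← intervalIntegral.integral_eq_integral_of_support_subset (a := -1) (b := 2 * a k),
      intervalIntegral.integral_eq_sub_of_hasDerivAt (fun x _ => hd k x)
        ((hcv k).intervalIntegrable _ _), h1 k _ le_rfl, h0 k (-1) (by norm_num)]
    · simp
    · intro x hx
      by_contra h
      refine hx (hsupp k x fun h' => h ⟨by linarith [h'.1], h'.2⟩)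
  · intro k x
    exact ((hd (k + 1) x).sub ((hd (k + 1) (x - a k)).comp_sub_const x (a k))).div_const (a k)

end

lemma abs_pow_bound {p : ℝ} (hp : 0 < p) (hp1 : p < 1) {c : ℝ} (hc : 0 < c) (x y : ℝ) :
    |(x - y) / c| ^ p ≤ c ^ (-p) * (|x| ^ p + |y| ^ p) := by
  rw [abs_div, abs_of_pos hc, Real.div_rpow (abs_nonneg _) hc.le, Real.rpow_neg hc.le,
    div_eq_inv_mul]
  apply mul_le_mul_of_nonneg_left _ (by positivity)
  calc |x - y| ^ p ≤ (|x| + |y|) ^ p := Real.rpow_le_rpow (abs_nonneg _) (abs_sub _ _) hp.le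
    _ ≤ _ := Real.rpow_add_le_add_rpow (abs_nonneg _) (abs_nonneg _) hp.le hp1.le

lemma main_aux_s12 {a : ℕ → ℝ} {p : ℝ} (hp : 0 < p) (hp1 : p < 1)
    (ha : ∀ k, 0 < a k) (ha2 : ∀ k, 2 * a (k + 1) ≤ a k)
    (ha3 : ∀ k, 2 * a (k + 1) ^ (1 - p) ≤ a k) :
    ∃ v : ℝ → ℝ, ContDiff ℝ (⊤ : ℕ∞) v ∧ (∀ x, x ∉ Icc 0 (2 * a 0) → v x = 0) ∧
      (∫ x, v x = 1) ∧ ∀ k, Integrable (fun x => |iteratedDeriv k v x| ^ p) ∧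
        ∫ x, |iteratedDeriv k v x| ^ p ≤ 2 * a 0 ^ (1 - p) := by
  obtain ⟨v, hc, hb, hs, hi, hd⟩ := exists_v ha ha2
  have hderiv : ∀ k, deriv (v k) = fun x => (v (k + 1) x - v (k + 1) (x - a k)) / a k :=
    fun k => funext fun x => (hd k x).deriv
  have hsm : ∀ n : ℕ, ∀ k, ContDiff ℝ n (v k) := by
    intro n
    induction n with
    | zero => intro k; exact contDiff_zero.2 (hc k)
    | succ n ih =>
      intro k
      push_cast
      rw [contDiff_succ_iff_deriv]
      refine ⟨fun x => (hd k x).differentiableAt, by simp, ?_⟩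
      rw [hderiv]
      exact ((ih _).sub ((ih _).comp (contDiff_id.sub contDiff_const))).div_const _
  have hit : ∀ j k x, iteratedDeriv (j + 1) (v k) x =
      (iteratedDeriv j (v (k + 1)) x - iteratedDeriv j (v (k + 1)) (x - a k)) / a k := by
    intro j k x
    rw [iteratedDeriv_succ', hderiv]
    have h2 : ContDiff ℝ j (fun x => v (k + 1) (x - a k)) :=
      (hsm j (k + 1)).comp (contDiff_id.sub contDiff_const)
    have e : (fun x => (v (k + 1) x - v (k + 1) (x - a k)) / a k) =
        fun x => (a k)⁻¹ * (v (k + 1) - fun x => v (k + 1) (x - a k)) x := by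
      funext x; simp [div_eq_inv_mul]
    rw [e, iteratedDeriv_const_mul_field,
      iteratedDeriv_sub (hsm j (k + 1)).contDiffAt h2.contDiffAt, iteratedDeriv_comp_sub_const,
      div_eq_inv_mul]
  have key : ∀ j k, Integrable (fun x => |iteratedDeriv j (v k) x| ^ p) ∧
        ∫ x, |iteratedDeriv j (v k) x| ^ p ≤ 2 * a k ^ (1 - p) := by
    intro j
    induction j with
    | zero =>
      intro k
      have hak := ha k
      simp only [iteratedDeriv_zero]
      have hg : Integrable ((Icc 0 (2 * a k)).indicator fun _ : ℝ => (1 / a k) ^ p) := by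
        rw [integrable_indicator_iff measurableSet_Icc]
        exact continuous_const.integrableOn_Icc
      have hle : ∀ x, |v k x| ^ p ≤ (Icc 0 (2 * a k)).indicator (fun _ : ℝ => (1 / a k) ^ p) x := by
        intro x
        by_cases hx : x ∈ Icc 0 (2 * a k)
        · rw [indicator_of_mem hx]
          exact Real.rpow_le_rpow (abs_nonneg _) (hb k x) hp.le
        · rw [indicator_of_notMem hx, hs k x hx]
          simp [hp.ne']
      have hIntg : Integrable (fun x => |v k x| ^ p) := by
        refine hg.mono' ?_ (Eventually.of_forall fun x => ?_)
        · exact ((hc k).abs.rpow_const fun x => Or.inr hp.le).aestronglyMeasurable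
        · rw [Real.norm_eq_abs, abs_of_nonneg (by positivity)]
          exact hle x
      refine ⟨hIntg, (integral_mono hIntg hg hle).trans (le_of_eq ?_)⟩
      rw [integral_indicator measurableSet_Icc, setIntegral_const, Measure.real, Real.volume_Icc,
        ENNReal.toReal_ofReal (by linarith), Real.rpow_sub hak, Real.rpow_one,
        Real.div_rpow (by norm_num) hak.le, Real.one_rpow, smul_eq_mul]
      ring
    | succ j ih =>
      intro k
      have hak := ha k
      obtain ⟨i1, i2⟩ := ih (k + 1)
      have i1' := i1.comp_sub_right (a k)
      have hg := (i1.add i1').const_mul (a k ^ (-p))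
      have hle : ∀ x, |iteratedDeriv (j + 1) (v k) x| ^ p ≤ a k ^ (-p) *
          (|iteratedDeriv j (v (k + 1)) x| ^ p + |iteratedDeriv j (v (k + 1)) (x - a k)| ^ p) := by
        intro x
        rw [hit]
        exact abs_pow_bound hp hp1 hak _ _
      have hIntg : Integrable (fun x => |iteratedDeriv (j + 1) (v k) x| ^ p) := by
        refine hg.mono' ?_ (Eventually.of_forall fun x => ?_)
        · exact (((hsm (j + 1) k).continuous_iteratedDeriv _ le_rfl).abs.rpow_const
            fun x => Or.inr hp.le).aestronglyMeasurable
        · rw [Real.norm_eq_abs, abs_of_nonneg (by positivity)]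
          exact hle x
      refine ⟨hIntg, (integral_mono hIntg hg hle).trans ?_⟩
      have e : ∫ x, a k ^ (-p) * (|iteratedDeriv j (v (k + 1)) x| ^ p +
          |iteratedDeriv j (v (k + 1)) (x - a k)| ^ p) =
          a k ^ (-p) * (2 * ∫ x, |iteratedDeriv j (v (k + 1)) x| ^ p) := by
        rw [integral_const_mul, integral_add i1 i1',
          integral_sub_right_eq_self (fun x => |iteratedDeriv j (v (k + 1)) x| ^ p) (a k)]
        ring
      refine e.le.trans ?_
      have h3 := ha3 k
      have e2 : a k ^ (1 - p) = a k ^ (-p) * a k := by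
        rw [sub_eq_add_neg, add_comm, Real.rpow_add hak, Real.rpow_one]
      rw [e2]
      have : 0 < a k ^ (-p) := by positivity
      calc a k ^ (-p) * (2 * ∫ x, |iteratedDeriv j (v (k + 1)) x| ^ p)
          ≤ a k ^ (-p) * (2 * a k) := by
            apply mul_le_mul_of_nonneg_left _ this.le
            linarith
        _ = _ := by ring
  exact ⟨v 0, contDiff_infty.2 fun n => hsm n 0, hs 0, hi 0, fun k => key k 0⟩

noncomputable def seqA (p a0 : ℝ) : ℕ → ℝ
  | 0 => a0
  | n + 1 => (seqA p a0 n / 2) ^ (1 / (1 - p))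

lemma seqA_pos {p a0 : ℝ} (h : 0 < a0) (n : ℕ) : 0 < seqA p a0 n := by
  induction n with
  | zero => exact h
  | succ n ih => unfold seqA; positivity

lemma seqA_half {p a0 : ℝ} (hp : 0 < p) (hp1 : p < 1) (n : ℕ) (h0 : 0 < seqA p a0 n)
    (h1 : seqA p a0 n ≤ 1) : seqA p a0 (n + 1) ≤ seqA p a0 n / 2 := by
  have := Real.rpow_le_rpow_of_exponent_ge (x := seqA p a0 n / 2) (by positivity) (by linarith)
    (show 1 ≤ 1 / (1 - p) by rw [le_div_iff₀ (by linarith)]; linarith)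
  rwa [Real.rpow_one] at this

lemma seqA_le {p a0 : ℝ} (hp : 0 < p) (hp1 : p < 1) (h : 0 < a0) (h1 : a0 ≤ 1) (n : ℕ) :
    seqA p a0 n ≤ 1 := by
  induction n with
  | zero => exact h1
  | succ n ih =>
    have := seqA_half hp hp1 n (seqA_pos h n) ih
    linarith [seqA_pos (p := p) h n]

/-- Lemma: mollifiers in `C`. For any `ε₁, ε₂ > 0` there is a nonzero smooth
`v` with `‖v^(k)‖_p ≤ ε₁ M_{k+1}` for all `k`, support contained in `[0, ε₂]`, and integral `1`;
in particular `v` lies in the class `C`. -/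
theorem exists_mollifier_in_C (p : ℝ) (hp : 0 < p) (hp1 : p < 1)
    (M : ℕ → ℝ) (hM : ∀ k, 1 ≤ M k) (ε₁ ε₂ : ℝ) (hε₁ : 0 < ε₁) (hε₂ : 0 < ε₂) :
    ∃ v : ℝ → ℝ, v ≠ 0 ∧ ContDiff ℝ (⊤ : ℕ∞) v ∧
      (∀ k, MemLp' p (iteratedDeriv k v)) ∧
      (∀ k, pNorm p (iteratedDeriv k v) ≤ ε₁ * M (k + 1)) ∧
      Function.support v ⊆ Set.Icc 0 ε₂ ∧
      (∫ t : ℝ, v t) = 1 ∧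
      BddAbove (Set.range fun k : ℕ => pNorm p (iteratedDeriv k v) / M k) := by
  have h1p : 0 < 1 - p := by linarith
  obtain ⟨b, hb0, hb1⟩ : ∃ b : ℝ, 0 < b ∧ 2 * b ^ (1 - p) = ε₁ ^ p := by
    refine ⟨(ε₁ ^ p / 2) ^ (1 / (1 - p)), by positivity, ?_⟩
    rw [← Real.rpow_mul (by positivity), one_div_mul_cancel h1p.ne', Real.rpow_one]
    ring
  set a0 := min 1 (min (ε₂ / 2) b) with ha0
  have h0 : 0 < a0 := by simp only [ha0, lt_min_iff]; exact ⟨one_pos, by positivity, hb0⟩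
  have hle1 : a0 ≤ 1 := min_le_left _ _
  have hle2 : a0 ≤ ε₂ / 2 := (min_le_right _ _).trans (min_le_left _ _)
  have hle3 : a0 ≤ b := (min_le_right _ _).trans (min_le_right _ _)
  obtain ⟨v, hv, hs, hi, hk⟩ := main_aux_s12 (a := seqA p a0) hp hp1 (seqA_pos h0)
    (fun k => by
      have := seqA_half hp hp1 k (seqA_pos h0 k) (seqA_le hp hp1 h0 hle1 k)
      linarith)
    (fun k => by
      have := seqA_pos (p := p) h0 k
      rw [seqA, ← Real.rpow_mul (by positivity), one_div_mul_cancel h1p.ne', Real.rpow_one]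
      linarith)
  have hn : ∀ k, pNorm p (iteratedDeriv k v) ≤ ε₁ := by
    intro k
    have hb : 2 * seqA p a0 0 ^ (1 - p) ≤ ε₁ ^ p := by
      rw [← hb1]
      have := Real.rpow_le_rpow h0.le hle3 h1p.le
      simpa [seqA] using this
    unfold pNorm
    calc _ ≤ (ε₁ ^ p) ^ (1 / p) :=
          Real.rpow_le_rpow (integral_nonneg fun x => by positivity) ((hk k).2.trans hb)
            (by positivity)
      _ = ε₁ := by rw [← Real.rpow_mul hε₁.le, mul_one_div_cancel hp.ne', Real.rpow_one]
  refine ⟨v, ?_, hv, fun k => (hk k).1, fun k => ?_, ?_, hi, ?_⟩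
  · rintro rfl
    simp at hi
  · exact (hn k).trans (le_mul_of_one_le_right hε₁.le (hM _))
  · intro x hx
    by_contra h
    refine hx (hs x fun h' => h ⟨h'.1, h'.2.trans ?_⟩)
    simp only [seqA]
    linarith
  · refine ⟨ε₁, ?_⟩
    rintro _ ⟨k, rfl⟩
    have := hM k
    show _ / _ ≤ _
    rw [div_le_iff₀ (by linarith)]
    exact (hn k).trans (le_mul_of_one_le_right hε₁.le (hM _))
end

section
/- Let p ∈ (0,1) and let M = (M_k)_{k≥0} satisfy M_k ≥ 1 for all k. For any real interval I = [a,b] with a < b and any ε > 0 and η > 0 there exists a smooth function u : ℝ → ℝ with all derivatives in L^p(ℝ) such that ‖u − χ_I‖_p < ε and ‖u^{(k)}‖_p ≤ η·M_k for every k ≥ 1. -/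
open Real MeasureTheory Filter Set

/-- The averaging recursion: `G d m` is the composition of the averaging operators of widths
`w m, …, w (m+d-1)` applied to the Heaviside step. -/
noncomputable def csG (w : ℕ → ℝ) : ℕ → ℕ → ℝ → ℝ
  | 0, _ => fun x => if x ≤ 0 then 0 else 1
  | (d+1), m => fun x => ∫ t in (0:ℝ)..1, csG w d (m+1) (x - w m * t)

lemma cs_intble {f : ℝ → ℝ} (hf : Monotone f) {w : ℝ} (hw : 0 < w) (x : ℝ) (a b : ℝ) :
    IntervalIntegrable (fun t => f (x - w * t)) volume a b := by
  apply Antitone.intervalIntegrable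
  intro s t hst
  apply hf
  nlinarith

lemma csG_prop (w W : ℕ → ℝ) (hw : ∀ m, 0 < w m) (hW0 : ∀ m, 0 < W m)
    (hW : ∀ m, w m + W (m+1) ≤ W m) (d : ℕ) : ∀ m,
    Monotone (csG w d m) ∧ (∀ x, 0 ≤ csG w d m x) ∧ (∀ x, csG w d m x ≤ 1) ∧
    (∀ x ≤ 0, csG w d m x = 0) ∧ (∀ x, W m ≤ x → csG w d m x = 1) := by
  induction d with
  | zero =>
    intro m
    refine ⟨?_, ?_, ?_, ?_, ?_⟩
    · intro x y hxy
      simp only [csG]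
      split_ifs <;> linarith
    · intro x; simp only [csG]; split_ifs <;> norm_num
    · intro x; simp only [csG]; split_ifs <;> norm_num
    · intro x hx; simp [csG, hx]
    · intro x hx
      have : ¬ x ≤ 0 := by have := hW0 m; linarith
      simp [csG, this]
  | succ d ih =>
    intro m
    obtain ⟨h1, h2, h3, h4, h5⟩ := ih (m+1)
    refine ⟨?_, ?_, ?_, ?_, ?_⟩
    · intro x y hxy
      simp only [csG]
      apply intervalIntegral.integral_mono_on zero_le_one (cs_intble h1 (hw m) _ _ _)
        (cs_intble h1 (hw m) _ _ _)
      intro t _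
      apply h1; linarith
    · intro x; simp only [csG]
      exact intervalIntegral.integral_nonneg zero_le_one (fun t _ => h2 _)
    · intro x; simp only [csG]
      calc _ ≤ ∫ t in (0:ℝ)..1, (1:ℝ) :=
            intervalIntegral.integral_mono_on zero_le_one (cs_intble h1 (hw m) _ _ _)
              (by simp) (fun t _ => h3 _)
        _ = 1 := by simp
    · intro x hx; simp only [csG]
      calc _ = ∫ t in (0:ℝ)..1, (0:ℝ) := by
            apply intervalIntegral.integral_congr
            intro t ht
            rw [uIcc_of_le zero_le_one] at ht
            apply h4
            have := mul_nonneg (hw m).le ht.1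
            linarith
        _ = 0 := by simp
    · intro x hx; simp only [csG]
      calc _ = ∫ t in (0:ℝ)..1, (1:ℝ) := by
            apply intervalIntegral.integral_congr
            intro t ht
            rw [uIcc_of_le zero_le_one] at ht
            apply h5
            have := mul_le_mul_of_nonneg_left ht.2 (hw m).le
            have := hW m
            linarith
        _ = 1 := by simp

lemma csG_anti (w W : ℕ → ℝ) (hw : ∀ m, 0 < w m) (hW0 : ∀ m, 0 < W m)
    (hW : ∀ m, w m + W (m+1) ≤ W m) (d : ℕ) : ∀ m x, csG w (d+1) m x ≤ csG w d m x := by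
  induction d with
  | zero =>
    intro m x
    by_cases hx : x ≤ 0
    · rw [(csG_prop w W hw hW0 hW 1 m).2.2.2.1 x hx, (csG_prop w W hw hW0 hW 0 m).2.2.2.1 x hx]
    · have := (csG_prop w W hw hW0 hW 1 m).2.2.1 x
      simpa [csG, hx] using this
  | succ d ih =>
    intro m x
    rw [csG, csG]
    exact intervalIntegral.integral_mono_on zero_le_one
      (cs_intble (csG_prop w W hw hW0 hW (d+1) (m+1)).1 (hw m) _ _ _)
      (cs_intble (csG_prop w W hw hW0 hW d (m+1)).1 (hw m) _ _ _) (fun t _ => ih _ _)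

lemma cs_exists_v (w W : ℕ → ℝ) (hw : ∀ m, 0 < w m) (hW0 : ∀ m, 0 < W m)
    (hW : ∀ m, w m + W (m+1) ≤ W m) : ∃ v : ℕ → ℝ → ℝ, ∀ m,
    Monotone (v m) ∧ (∀ x, 0 ≤ v m x) ∧ (∀ x, v m x ≤ 1) ∧
    (∀ x ≤ 0, v m x = 0) ∧ (∀ x, W m ≤ x → v m x = 1) ∧
    (∀ x, v m x = ∫ t in (0:ℝ)..1, v (m+1) (x - w m * t)) := by
  have hP := csG_prop w W hw hW0 hW
  have hlim : ∀ m x, Tendsto (fun d => csG w d m x) atTop (nhds (⨅ d, csG w d m x)) := by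
    intro m x
    apply tendsto_atTop_ciInf
    · exact antitone_nat_of_succ_le (fun d => csG_anti w W hw hW0 hW d m x)
    · exact ⟨0, by rintro _ ⟨d, rfl⟩; exact (hP d m).2.1 x⟩
  refine ⟨fun m x => ⨅ d, csG w d m x, fun m => ⟨?_, ?_, ?_, ?_, ?_, ?_⟩⟩
  · intro x y hxy
    exact le_of_tendsto_of_tendsto' (hlim m x) (hlim m y) (fun d => (hP d m).1 hxy)
  · intro x
    exact ge_of_tendsto' (hlim m x) (fun d => (hP d m).2.1 x)
  · intro x
    exact le_of_tendsto' (hlim m x) (fun d => (hP d m).2.2.1 x)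
  · intro x hx
    simp [(hP _ m).2.2.2.1 x hx]
  · intro x hx
    simp [(hP _ m).2.2.2.2 x hx]
  · intro x
    have h1 := (tendsto_add_atTop_iff_nat 1).2 (hlim m x)
    refine tendsto_nhds_unique h1 ?_
    simp only [csG]
    apply intervalIntegral.tendsto_integral_filter_of_dominated_convergence (fun _ => (1:ℝ))
    · filter_upwards with d
      exact (cs_intble (hP d (m+1)).1 (hw m) x 0 1).def'.aestronglyMeasurable
    · filter_upwards with d
      filter_upwards with t _
      rw [Real.norm_eq_abs, abs_of_nonneg ((hP d (m+1)).2.1 _)]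
      exact (hP d (m+1)).2.2.1 _
    · simp
    · filter_upwards with t _
      exact hlim _ _

lemma cs_avg_eq {f g : ℝ → ℝ} {w : ℝ} (hw : 0 < w)
    (h : ∀ x, g x = ∫ t in (0:ℝ)..1, f (x - w * t)) (hf : Monotone f) (x : ℝ) :
    g x = w⁻¹ * ((∫ t in (0:ℝ)..x, f t) - ∫ t in (0:ℝ)..(x - w), f t) := by
  rw [h, intervalIntegral.integral_comp_sub_mul f hw.ne' x, 
    intervalIntegral.integral_interval_sub_left hf.intervalIntegrable hf.intervalIntegrable]
  simp

lemma cs_avg_cont {f g : ℝ → ℝ} {w : ℝ} (hw : 0 < w)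
    (h : ∀ x, g x = ∫ t in (0:ℝ)..1, f (x - w * t)) (hf : Monotone f) : Continuous g := by
  have hc := intervalIntegral.continuous_primitive (μ := volume)
    (fun a b => hf.intervalIntegrable (a := a) (b := b)) 0
  rw [funext (cs_avg_eq hw h hf)]
  have h2 : Continuous fun x : ℝ => ∫ t in (0:ℝ)..(x - w), f t :=
    hc.comp (continuous_id.sub continuous_const)
  exact continuous_const.mul (hc.sub h2)

lemma cs_avg_deriv {f g : ℝ → ℝ} {w : ℝ} (hw : 0 < w)
    (h : ∀ x, g x = ∫ t in (0:ℝ)..1, f (x - w * t)) (hf : Monotone f) (hfc : Continuous f)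
    (x : ℝ) : HasDerivAt g (w⁻¹ * (f x - f (x - w))) x := by
  rw [funext (cs_avg_eq hw h hf)]
  apply HasDerivAt.const_mul
  apply HasDerivAt.sub
  · exact (hfc.integral_hasStrictDerivAt 0 x).hasDerivAt
  · exact HasDerivAt.comp_sub_const x w (hfc.integral_hasStrictDerivAt 0 (x - w)).hasDerivAt

lemma cs_vol_sub (c : ℝ) (S : Set ℝ) : volume ((fun x => x - c) ⁻¹' S) = volume S := by
  simp only [sub_eq_add_neg]
  exact measure_preimage_add_right volume (-c) S

lemma cs_main (w : ℕ → ℝ) (hw : ∀ m, 0 < w m) (hw2 : ∀ m, w (m+1) ≤ w m / 2) :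
    ∃ v : ℝ → ℝ, ContDiff ℝ (⊤ : ℕ∞) v ∧ (∀ x, 0 ≤ v x) ∧ (∀ x, v x ≤ 1) ∧
    (∀ x ≤ 0, v x = 0) ∧ (∀ x, 2 * w 0 ≤ x → v x = 1) ∧
    ∀ k, (∀ x, |iteratedDeriv (k+1) v x| ≤ ∏ j ∈ Finset.range (k+1), (2 / w j)) ∧
      ∃ S : Set ℝ, MeasurableSet S ∧ volume S ≤ ENNReal.ofReal (2^(k+1) * w k) ∧
        ∀ x, x ∉ S → iteratedDeriv (k+1) v x = 0 := by
  obtain ⟨v, hv⟩ := cs_exists_v w (fun m => 2 * w m) hw (fun m => by have := hw m; positivity)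
    (fun m => by have := hw2 m; linarith)
  have hcont : ∀ m, Continuous (v m) := fun m =>
    cs_avg_cont (hw m) (hv m).2.2.2.2.2 (hv (m+1)).1
  have hder : ∀ m x, HasDerivAt (v m) ((w m)⁻¹ * (v (m+1) x - v (m+1) (x - w m))) x := fun m =>
    cs_avg_deriv (hw m) (hv m).2.2.2.2.2 (hv (m+1)).1 (hcont _)
  have hder' : ∀ m, deriv (v m) = fun x => (w m)⁻¹ * (v (m+1) x - v (m+1) (x - w m)) :=
    fun m => funext fun x => (hder m x).deriv
  have hsm : ∀ n : ℕ, ∀ m, ContDiff ℝ n (v m) := by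
    intro n
    induction n with
    | zero => intro m; exact contDiff_zero.2 (hcont m)
    | succ n ih =>
      intro m
      push_cast
      rw [contDiff_succ_iff_deriv]
      refine ⟨fun x => (hder m x).differentiableAt, by simp, ?_⟩
      rw [hder']
      exact contDiff_const.mul ((ih _).sub ((ih _).comp (contDiff_id.sub contDiff_const)))
  have hit : ∀ k m x, iteratedDeriv (k+1) (v m) x =
      (w m)⁻¹ * (iteratedDeriv k (v (m+1)) x - iteratedDeriv k (v (m+1)) (x - w m)) := by
    intro k m x
    rw [iteratedDeriv_succ', hder']
    have hs : ContDiff ℝ k (fun x => v (m+1) (x - w m)) :=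
      (hsm k _).comp (contDiff_id.sub contDiff_const)
    rw [iteratedDeriv_const_mul_field, iteratedDeriv_fun_sub (hsm k _).contDiffAt hs.contDiffAt,
      iteratedDeriv_comp_sub_const]
  have hbd : ∀ k m x, |iteratedDeriv k (v m) x| ≤ ∏ j ∈ Finset.range k, (2 / w (m + j)) := by
    intro k
    induction k with
    | zero =>
      intro m x
      simp only [iteratedDeriv_zero, Finset.range_zero, Finset.prod_empty]
      rw [abs_of_nonneg ((hv m).2.1 x)]
      exact (hv m).2.2.1 x
    | succ k ih =>
      intro m x
      rw [hit, Finset.prod_range_succ', abs_mul, abs_of_pos (inv_pos.2 (hw m))]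
      have h1 := ih (m+1) x
      have h2 := ih (m+1) (x - w m)
      have e : ∏ j ∈ Finset.range k, (2 / w (m + (j + 1))) =
          ∏ j ∈ Finset.range k, (2 / w (m + 1 + j)) := by
        apply Finset.prod_congr rfl; intro j _; congr 2; ring
      rw [e]
      set P := ∏ j ∈ Finset.range k, (2 / w (m + 1 + j))
      have h3 := abs_sub (iteratedDeriv k (v (m+1)) x) (iteratedDeriv k (v (m+1)) (x - w m))
      calc _ ≤ (w m)⁻¹ * (2 * P) := by
            apply mul_le_mul_of_nonneg_left _ (inv_pos.2 (hw m)).le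
            linarith
        _ = _ := by simp only [add_zero]; ring
  have hsupp : ∀ k m, ∃ S : Set ℝ, MeasurableSet S ∧
      volume S ≤ ENNReal.ofReal (2^(k+1) * w (m+k)) ∧
        ∀ x, x ∉ S → iteratedDeriv (k+1) (v m) x = 0 := by
    intro k
    induction k with
    | zero =>
      intro m
      refine ⟨Icc 0 (2 * w m), measurableSet_Icc, by simp, ?_⟩
      intro x hx
      have hx' : x < 0 ∨ 2 * w m < x := by
        by_contra hcon
        push Not at hcon
        exact hx ⟨hcon.1, hcon.2⟩
      rw [zero_add, iteratedDeriv_one]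
      rcases hx' with h | h
      · have : v m =ᶠ[nhds x] fun _ => 0 := by
          filter_upwards [Iio_mem_nhds h] with y hy
          exact (hv m).2.2.2.1 y (le_of_lt hy)
        rw [this.deriv_eq]; simp
      · have : v m =ᶠ[nhds x] fun _ => 1 := by
          filter_upwards [Ioi_mem_nhds h] with y hy
          exact (hv m).2.2.2.2.1 y (le_of_lt hy)
        rw [this.deriv_eq]; simp
    | succ k ih =>
      intro m
      obtain ⟨S, hS, hvol, hz⟩ := ih (m+1)
      refine ⟨S ∪ (fun x => x - w m) ⁻¹' S, hS.union (hS.preimage (by fun_prop)), ?_, ?_⟩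
      · refine (measure_union_le _ _).trans ?_
        rw [cs_vol_sub]
        refine (add_le_add hvol hvol).trans ?_
        have hpos : 0 ≤ 2^(k+1) * w (m+1+k) := mul_nonneg (by positivity) (hw _).le
        rw [← ENNReal.ofReal_add hpos hpos]
        apply ENNReal.ofReal_le_ofReal
        have e : m + (k+1) = m + 1 + k := by ring
        rw [e, pow_succ 2 (k+1)]
        linarith
      · intro x hx
        simp only [mem_union, mem_preimage, not_or] at hx
        rw [hit, hz _ hx.1, hz _ hx.2]; simp
  refine ⟨v 0, contDiff_infty.2 (fun n => hsm n 0), (hv 0).2.1, (hv 0).2.2.1, (hv 0).2.2.2.1,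
    (hv 0).2.2.2.2.1, fun k => ⟨?_, ?_⟩⟩
  · simpa using hbd (k+1) 0
  · simpa using hsupp k 0

lemma cs_pick (p : ℝ) (hp : 0 < p) (hp1 : p < 1) (η : ℝ) (hη : 0 < η) (k : ℕ) (r D : ℝ)
    (hr : 0 < r) (hD : 0 < D) :
    ∃ w : ℝ, 0 < w ∧ w ≤ r / 2 ∧ (2 * (D * (2 / w))) ^ p * (2 ^ (k+2) * w) ≤ η ^ p := by
  have h1 : Tendsto (fun w : ℝ => ((4 * D) ^ p * 2 ^ (k+2)) * w ^ (1 - p)) (nhdsWithin 0 (Ioi 0))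
      (nhds 0) := by
    have : ContinuousAt (fun w : ℝ => ((4 * D) ^ p * 2 ^ (k+2)) * w ^ (1 - p)) 0 :=
      continuousAt_const.mul (Real.continuousAt_rpow_const 0 (1-p) (Or.inr (by linarith)))
    have h := this.tendsto
    simp only [Real.zero_rpow (by linarith : (1 - p) ≠ 0), mul_zero] at h
    exact h.mono_left nhdsWithin_le_nhds
  have h2 := h1.eventually (Iio_mem_nhds (Real.rpow_pos_of_pos hη p))
  have h3 : ∀ᶠ w : ℝ in nhdsWithin 0 (Ioi 0), w ∈ Ioo 0 (r/2) :=
    Ioo_mem_nhdsGT (by positivity)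
  obtain ⟨w, hw2, hw3⟩ := (h2.and h3).exists
  refine ⟨w, hw3.1, hw3.2.le, ?_⟩
  have hw := hw3.1
  refine le_trans (le_of_eq ?_) (le_of_lt hw2)
  have e : 2 * (D * (2 / w)) = (4 * D) / w := by ring
  rw [e, Real.div_rpow (by positivity) hw.le, Real.rpow_sub hw, Real.rpow_one]
  ring

lemma cs_seq (p : ℝ) (hp : 0 < p) (hp1 : p < 1) (η : ℝ) (hη : 0 < η) (r : ℝ) (hr : 0 < r) :
    ∃ w : ℕ → ℝ, (∀ m, 0 < w m) ∧ (∀ m, w (m+1) ≤ w m / 2) ∧ w 0 ≤ r / 2 ∧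
    ∀ k, (2 * ∏ j ∈ Finset.range (k+1), (2 / w j)) ^ p * (2 ^ (k+2) * w k) ≤ η ^ p := by
  have H : ∀ (k : ℕ) (r D : ℝ), ∃ w : ℝ, 0 < r → 0 < D → (0 < w ∧ w ≤ r / 2 ∧
      (2 * (D * (2 / w))) ^ p * (2 ^ (k+2) * w) ≤ η ^ p) := by
    intro k r D
    by_cases h : 0 < r ∧ 0 < D
    · obtain ⟨w, hw⟩ := cs_pick p hp hp1 η hη k r D h.1 h.2
      exact ⟨w, fun _ _ => hw⟩
    · exact ⟨0, fun a b => absurd ⟨a, b⟩ h⟩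
  choose F hF using H
  let s : ℕ → ℝ × ℝ := fun n => Nat.rec (F 0 r 1, 1)
    (fun k q => (F (k+1) q.1 (q.2 * (2 / q.1)), q.2 * (2 / q.1))) n
  have hs0 : s 0 = (F 0 r 1, 1) := rfl
  have hs1 : ∀ k, s (k+1) = (F (k+1) (s k).1 ((s k).2 * (2 / (s k).1)),
    (s k).2 * (2 / (s k).1)) := fun k => rfl
  have hpos : ∀ k, 0 < (s k).1 ∧ 0 < (s k).2 := by
    intro k
    induction k with
    | zero => rw [hs0]; exact ⟨(hF 0 r 1 hr one_pos).1, one_pos⟩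
    | succ k ih =>
      rw [hs1]
      have h2 : 0 < (s k).2 * (2 / (s k).1) := by have := ih.1; have := ih.2; positivity
      exact ⟨(hF (k+1) _ _ ih.1 h2).1, h2⟩
  have hprod : ∀ k, (s k).2 = ∏ j ∈ Finset.range k, (2 / (s j).1) := by
    intro k
    induction k with
    | zero => rw [hs0]; simp
    | succ k ih => rw [Finset.prod_range_succ, ← ih, hs1]
  refine ⟨fun k => (s k).1, fun m => (hpos m).1, ?_, ?_, ?_⟩
  · intro m
    have h2 := (hpos (m+1)).2
    simp only [hs1] at h2 ⊢
    exact (hF (m+1) _ _ (hpos m).1 h2).2.1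
  · exact (hF 0 r 1 hr one_pos).2.1
  · intro k
    rw [Finset.prod_range_succ, ← hprod]
    cases k with
    | zero => exact (hF 0 r 1 hr one_pos).2.2
    | succ k =>
      have h2 := (hpos (k+1)).2
      simp only [hs1] at h2 ⊢
      exact (hF (k+1) _ _ (hpos k).1 h2).2.2

lemma cs_int (p : ℝ) (hp : 0 < p) {f : ℝ → ℝ} (hf : Measurable f) {C V : ℝ} (hV : 0 ≤ V)
    (hC : ∀ x, |f x| ≤ C) {S : Set ℝ} (hS : MeasurableSet S) (hvol : volume S ≤ ENNReal.ofReal V)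
    (hz : ∀ x, x ∉ S → f x = 0) :
    MemLp' p f ∧ ∫ x, |f x| ^ p ≤ C ^ p * V := by
  have hfin : volume S ≠ ⊤ := (hvol.trans_lt ENNReal.ofReal_lt_top).ne
  have hC0 : 0 ≤ C := (abs_nonneg _).trans (hC 0)
  have hle : ∀ x, |f x| ^ p ≤ S.indicator (fun _ => C ^ p) x := by
    intro x
    by_cases hx : x ∈ S
    · rw [indicator_of_mem hx]
      exact Real.rpow_le_rpow (abs_nonneg _) (hC x) hp.le
    · rw [indicator_of_notMem hx, hz x hx, abs_zero, Real.zero_rpow hp.ne']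
  have hI : Integrable (S.indicator (fun _ => C ^ p)) volume :=
    (integrable_indicator_iff hS).2 (integrableOn_const hfin)
  have hint : Integrable (fun x => |f x| ^ p) volume := by
    refine hI.mono' ?_ ?_
    · have : Measurable (fun x => |f x| ^ p) := by fun_prop
      exact this.aestronglyMeasurable
    · filter_upwards with x
      rw [Real.norm_eq_abs, abs_of_nonneg (Real.rpow_nonneg (abs_nonneg _) _)]
      exact hle x
  refine ⟨hint, (integral_mono hint hI hle).trans ?_⟩
  rw [integral_indicator hS, setIntegral_const, smul_eq_mul, mul_comm]
  apply mul_le_mul_of_nonneg_left _ (Real.rpow_nonneg hC0 _)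
  exact ENNReal.toReal_le_of_le_ofReal hV hvol

/-- Lemma: approximation of indicators of intervals. For any interval
`[a,b]`, `ε > 0` and `η > 0`, there is a smooth `u` with all derivatives in `L^p` such that
`‖u - χ_{[a,b]}‖_p < ε` and `‖u^(k)‖_p ≤ η M_k` for all `k ≥ 1`. -/
theorem exists_smooth_approx_indicator (p : ℝ) (hp : 0 < p) (hp1 : p < 1)
    (M : ℕ → ℝ) (hM : ∀ k, 1 ≤ M k) (a b : ℝ) (hab : a < b)
    (ε η : ℝ) (hε : 0 < ε) (hη : 0 < η) :
    ∃ u : ℝ → ℝ, ContDiff ℝ (⊤ : ℕ∞) u ∧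
      (∀ k, MemLp' p (iteratedDeriv k u)) ∧
      pNorm p (fun x => u x - Set.indicator (Set.Icc a b) (fun _ => (1 : ℝ)) x) < ε ∧
      ∀ k, 1 ≤ k → pNorm p (iteratedDeriv k u) ≤ η * M k := by
  obtain ⟨w, hw, hw2, hw0, hwk⟩ := cs_seq p hp hp1 η hη (ε ^ p / 8) (by positivity)
  obtain ⟨v, hsm, hv0, hv1, hvz, hvo, hvk⟩ := cs_main w hw hw2
  have hsa : ∀ c, ContDiff ℝ (⊤ : ℕ∞) (fun x => v (x - c)) := fun c =>
    hsm.comp (contDiff_id.sub contDiff_const)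
  have hu : ContDiff ℝ (⊤ : ℕ∞) (fun x => v (x - a) - v (x - b)) := (hsa a).sub (hsa b)
  have hw0p := hw 0
  have hεp : 0 < ε ^ p := Real.rpow_pos_of_pos hε p
  have hbd : ∀ x y, |v x - v y| ≤ 1 := fun x y => by
    rw [abs_le]
    have := hv0 x; have := hv1 x; have := hv0 y; have := hv1 y
    constructor <;> linarith
  have hmeas : ∀ k, Measurable (iteratedDeriv k (fun x => v (x - a) - v (x - b))) := fun k =>
    (hu.continuous_iteratedDeriv k (by exact_mod_cast le_top)).measurable
  have hk : ∀ k, MemLp' p (iteratedDeriv (k+1) (fun x => v (x - a) - v (x - b))) ∧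
      ∫ x, |iteratedDeriv (k+1) (fun x => v (x - a) - v (x - b)) x| ^ p ≤ η ^ p := by
    intro k
    obtain ⟨hB, S, hS, hvol, hz⟩ := hvk k
    have hwp := hw k
    have e : ∀ x, iteratedDeriv (k+1) (fun x => v (x - a) - v (x - b)) x =
        iteratedDeriv (k+1) v (x - a) - iteratedDeriv (k+1) v (x - b) := by
      intro x
      have hle : (((k+1 : ℕ) : ℕ∞) : WithTop ℕ∞) ≤ ((⊤ : ℕ∞) : WithTop ℕ∞) := by
        exact_mod_cast le_top
      rw [iteratedDeriv_fun_sub ((hsa a).of_le hle).contDiffAt ((hsa b).of_le hle).contDiffAt,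
        iteratedDeriv_comp_sub_const, iteratedDeriv_comp_sub_const]
    have := cs_int p hp (hmeas (k+1)) (C := 2 * ∏ j ∈ Finset.range (k+1), (2 / w j))
      (V := 2 ^ (k+2) * w k) (by positivity) (fun x => by
        rw [e]
        have h3 := abs_sub (iteratedDeriv (k+1) v (x - a)) (iteratedDeriv (k+1) v (x - b))
        have h4 := hB (x - a)
        have h5 := hB (x - b)
        linarith) (S := (fun x => x - a) ⁻¹' S ∪ (fun x => x - b) ⁻¹' S)
      ((hS.preimage (by fun_prop)).union (hS.preimage (by fun_prop))) (by
        refine (measure_union_le _ _).trans ?_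
        rw [cs_vol_sub, cs_vol_sub]
        refine (add_le_add hvol hvol).trans ?_
        have hpos : 0 ≤ 2^(k+1) * w k := by positivity
        rw [← ENNReal.ofReal_add hpos hpos]
        apply ENNReal.ofReal_le_ofReal
        rw [pow_succ 2 (k+1)]
        linarith) (fun x hx => by
        simp only [mem_union, mem_preimage, not_or] at hx
        rw [e, hz _ hx.1, hz _ hx.2, sub_zero])
    exact ⟨this.1, this.2.trans (hwk k)⟩
  refine ⟨fun x => v (x - a) - v (x - b), hu, ?_, ?_, ?_⟩
  · intro k
    cases k with
    | succ k => exact (hk k).1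
    | zero =>
      refine (cs_int p hp (hmeas 0) (C := 1) (V := b + 2 * w 0 - a) (by linarith)
        (fun x => by rw [iteratedDeriv_zero]; exact hbd _ _)
        (S := Icc a (b + 2 * w 0)) measurableSet_Icc (by rw [Real.volume_Icc]) ?_).1
      intro x hx
      rw [iteratedDeriv_zero]
      have hx' : x < a ∨ b + 2 * w 0 < x := by
        by_contra hcon
        push Not at hcon
        exact hx ⟨hcon.1, hcon.2⟩
      rcases hx' with h | h
      · rw [hvz (x - a) (by linarith), hvz (x - b) (by linarith), sub_zero]
      · rw [hvo (x - a) (by linarith), hvo (x - b) (by linarith), sub_self]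
  · have hm : Measurable (fun x => v (x - a) - v (x - b) -
        Set.indicator (Set.Icc a b) (fun _ => (1 : ℝ)) x) :=
      hu.continuous.measurable.sub (measurable_const.indicator measurableSet_Icc)
    have h := (cs_int p hp hm (C := 2) (V := 4 * w 0) (by positivity) (fun x => by
        have h1 := hbd (x - a) (x - b)
        have h2 := abs_sub (v (x - a) - v (x - b))
          (Set.indicator (Set.Icc a b) (fun _ => (1 : ℝ)) x)
        have h3 : |Set.indicator (Set.Icc a b) (fun _ => (1 : ℝ)) x| ≤ 1 := by
          unfold Set.indicator
          split_ifs <;> simp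
        linarith) (S := Icc a (a + 2 * w 0) ∪ Icc b (b + 2 * w 0))
        (measurableSet_Icc.union measurableSet_Icc) (by
          refine (measure_union_le _ _).trans ?_
          rw [Real.volume_Icc, Real.volume_Icc, ← ENNReal.ofReal_add (by linarith) (by linarith)]
          apply ENNReal.ofReal_le_ofReal
          linarith) (fun x hx => by
          simp only [mem_union, mem_Icc, not_or, not_and, not_le] at hx
          obtain ⟨hx1, hx2⟩ := hx
          rcases lt_or_ge x a with h | h
          · rw [hvz (x - a) (by linarith), hvz (x - b) (by linarith),
              indicator_of_notMem (fun hh => absurd hh.1 (not_le.2 h))]; simp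
          · have h1 := hx1 h
            rcases lt_or_ge x b with h' | h'
            · rw [hvo (x - a) (by linarith), hvz (x - b) (by linarith),
                indicator_of_mem (show x ∈ Icc a b from ⟨h, h'.le⟩)]; simp
            · have h2 := hx2 h'
              rw [hvo (x - a) (by linarith), hvo (x - b) (by linarith),
                indicator_of_notMem (fun hh => absurd hh.2 (not_le.2 (by linarith)))]; simp)).2
    have h2p : (2:ℝ) ^ p ≤ 2 := by
      calc (2:ℝ) ^ p ≤ 2 ^ (1:ℝ) := Real.rpow_le_rpow_of_exponent_le one_le_two hp1.le
        _ = 2 := Real.rpow_one 2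
    have hlt : ∫ x, |v (x - a) - v (x - b) -
        Set.indicator (Set.Icc a b) (fun _ => (1 : ℝ)) x| ^ p < ε ^ p := by
      refine h.trans_lt ?_
      have := mul_le_mul_of_nonneg_right h2p (show 0 ≤ 4 * w 0 by positivity)
      linarith
    unfold pNorm
    calc _ < (ε ^ p) ^ (1 / p) := Real.rpow_lt_rpow
            (integral_nonneg fun x => Real.rpow_nonneg (abs_nonneg _) _) hlt (by positivity)
      _ = ε := by rw [one_div, Real.rpow_rpow_inv hε.le hp.ne']
  · intro k hk1
    obtain ⟨k, rfl⟩ : ∃ j, k = j + 1 := ⟨k - 1, by omega⟩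
    unfold pNorm
    calc _ ≤ (η ^ p) ^ (1 / p) := Real.rpow_le_rpow
            (integral_nonneg fun x => Real.rpow_nonneg (abs_nonneg _) _) (hk k).2 (by positivity)
      _ = η := by rw [one_div, Real.rpow_rpow_inv hη.le hp.ne']
      _ ≤ η * M (k+1) := le_mul_of_one_le_right hη.le (hM _)
end
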